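/- arXiv:2209.11443 — 2 statements merged into one kernel-verified Lean document; each statement's English description precedes it below -/
import Mathlib

section
/- Let q be a prime power, n ≥ 1, let f : F_qⁿ → ℕ, let w = max_{u ∈ ℙF_q^{n-1}} f*(u), and for 1 ≤ i ≤ w let ε_{≥i} = |{u ∈ ℙF_q^{n-1} : f*(u) ≥ i}| / |ℙF_q^{n-1}|. For an integer m ≥ 2q set r_i = ⌈(m·i + 1)/(2q − 1) − 1⌉ and d_i = r_i·q − 1 for 0 ≤ i ≤ w (so r₀ = 0 and d₀ = −1). Then ∑_{i=1}^{w} ε_{≥i} · ∑_{j = d_{i-1}+1}^{d_i} C(j+n−1, n−1) ≤ ∑_{x ∈ F_qⁿ} C(m·f(x)+n−1, n). -/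
/-- The maximal function of `f : F_qⁿ → ℕ` in direction `u`:
`f*(u) = max_a ∑_{t ∈ F_q} f(a + t·u)`. -/
def fstarF {F : Type*} [Field F] [Fintype F] {n : ℕ}
    (f : (Fin n → F) → ℕ) (u : Fin n → F) : ℕ :=
  Finset.univ.sup fun a : Fin n → F => ∑ t : F, f (a + t • u)

/-! The proof is the polynomial method with multiplicities. Record for a polynomial `P` its jets,
the Hasse derivatives of order less than `m * f x` at every point `x`; the right-hand side is the
dimension of the space of all jets. The space of the jets of the polynomials of degree less than `D`
grows with `D`, and its growth is bounded below one degree at a time.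

Passing from `D` to `D + 1`, what is lost are the forms `P` of degree `D` having the same jets as
some `Q` of lower degree. Restrict `P - Q` to a line with direction `X + u` infinitesimally close to
a direction `u` with `f*(u) ≥ i`: it vanishes so often that all its coefficients of low order in `X`
are zero, and since `P` is its top-degree part, `P` vanishes to order `r i` at `u` itself. At the
base point of the line the vanishing does not depend on the direction, so no order is lost there,
which is why the requirement is `(2q - 1) r i ≤ m i`.

A form of degree `D < q r` vanishing to order `r` at all nonzero points is zero. The codimension
of vanishing to order `r` at all points of a set `T` of nonzero vectors is submodular in `T` and
invariant under the transitive action of `GL n`. A submodular function dominates an additive one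
with the same total; averaging the latter over the group shows that the codimension is at least the
proportion of the nonzero vectors in `T` times the dimension of all forms of degree `D`.
-/

namespace KakeyaMaximal

open MvPolynomial Module

section PointIdeal

variable {σ R : Type*} [CommRing R]

/-- The ideal of the polynomials vanishing at the point `b`. A polynomial vanishes to order at
least `M` at `b`, in the sense of Hasse derivatives, when it lies in `pointIdeal b ^ M`. -/
noncomputable def pointIdeal (b : σ → R) : Ideal (MvPolynomial σ R) :=
  RingHom.ker (eval b)

/-- The substitution `P(X) ↦ P(X + b)`, whose coefficients are the Hasse derivatives of `P`
at `b`. -/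
noncomputable def translate (b : σ → R) : MvPolynomial σ R →ₐ[R] MvPolynomial σ R :=
  aeval fun i => X i + C (b i)

theorem map_mem_pow {A B : Type*} [CommSemiring A] [CommSemiring B] {I : Ideal A} {J : Ideal B}
    {f : A →+* B} (hf : I ≤ J.comap f) {M : ℕ} {a : A} (ha : a ∈ I ^ M) : f a ∈ J ^ M :=
  Ideal.le_comap_pow f M (Ideal.pow_right_mono hf M ha)

@[simp]
theorem constantCoeff_translate (b : σ → R) (P : MvPolynomial σ R) :
    constantCoeff (translate b P) = eval b P := by
  induction P using MvPolynomial.induction_on <;> simp_all [translate]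

theorem translate_neg_translate (b : σ → R) (P : MvPolynomial σ R) :
    translate (-b) (translate b P) = P := by
  induction P using MvPolynomial.induction_on <;> simp_all [translate, MvPolynomial.algebraMap_eq]

theorem mem_idealOfVars_iff {P : MvPolynomial σ R} : P ∈ idealOfVars σ R ↔ constantCoeff P = 0 := by
  rw [← pow_one (idealOfVars σ R), mem_pow_idealOfVars_iff', constantCoeff_eq]
  simp [Finsupp.degree_eq_zero_iff]

theorem mem_pow_pointIdeal_iff {b : σ → R} {M : ℕ} {P : MvPolynomial σ R} :
    P ∈ pointIdeal b ^ M ↔ ∀ α : σ →₀ ℕ, α.degree < M → coeff α (translate b P) = 0 := by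
  rw [← mem_pow_idealOfVars_iff']
  refine ⟨map_mem_pow (f := (translate b).toRingHom) fun Q hQ => ?_, fun h => ?_⟩
  · simpa [pointIdeal, mem_idealOfVars_iff] using hQ
  · rw [← translate_neg_translate b P]
    refine map_mem_pow (f := (translate (-b)).toRingHom) (fun Q hQ => ?_) h
    rw [← translate_neg_translate (-b) Q] at hQ
    simpa [pointIdeal, mem_idealOfVars_iff] using hQ

theorem coeff_mem_pow_of_mem_pow_comap_constantCoeff {J : Ideal R} {M : ℕ} {P : MvPolynomial σ R}
    (hP : P ∈ J.comap constantCoeff ^ M) (α : σ →₀ ℕ) : coeff α P ∈ J ^ (M - α.degree) := by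
  induction M generalizing P α with
  | zero => simp
  | succ M ih =>
    rw [pow_succ'] at hP
    refine Submodule.mul_induction_on hP (fun A hA B hB => ?_) fun A B hA hB => ?_
    · classical
      rw [coeff_mul]
      refine Ideal.sum_mem _ fun ⟨β, γ⟩ h => ?_
      obtain rfl : β + γ = α := Finset.HasAntidiagonal.mem_antidiagonal.1 h
      obtain rfl | hβ := eq_or_ne β 0
      · have hAB : coeff 0 A * coeff γ B ∈ J ^ (M - γ.degree + 1) :=
          pow_succ' J _ ▸ Ideal.mul_mem_mul hA (ih hB γ)
        refine Ideal.pow_le_pow_right ?_ hAB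
        rw [zero_add]
        lia
      · have := (Finsupp.degree_eq_zero_iff β).not.2 hβ
        refine Ideal.mul_mem_left _ _ (Ideal.pow_le_pow_right ?_ (ih hB γ))
        rw [map_add]
        lia
    · rw [coeff_add]
      exact add_mem hA hB

end PointIdeal

section Swap

variable {σ R : Type*} [CommRing R]

/-- The isomorphism `R[Xᵢ][T] → R[T][Xᵢ]`. For a polynomial `Q` in `T` over `R[Xᵢ]`, the polynomial
`coeff α (swap Q)` is obtained from `Q` by taking the coefficient at `α` of each coefficient. -/
noncomputable def swap :
    Polynomial (MvPolynomial σ R) →+* MvPolynomial σ (Polynomial R) :=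
  Polynomial.eval₂RingHom (MvPolynomial.map Polynomial.C) (C Polynomial.X)

theorem coeff_coeff_swap (Q : Polynomial (MvPolynomial σ R)) (α : σ →₀ ℕ) (k : ℕ) :
    (coeff α (swap Q)).coeff k = coeff α (Q.coeff k) := by
  induction Q using Polynomial.induction_on' with
  | add P Q hP hQ => simp [hP, hQ]
  | monomial l P =>
    simp only [swap, Polynomial.coe_eval₂RingHom, Polynomial.eval₂_monomial, ← C_pow,
      mul_comm _ (C _), coeff_C_mul, coeff_map, mul_comm _ (Polynomial.C _),
      Polynomial.coeff_C_mul_X_pow, Polynomial.coeff_monomial, eq_comm (a := k)]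
    split_ifs <;> simp

theorem natDegree_coeff_swap_le (Q : Polynomial (MvPolynomial σ R)) (α : σ →₀ ℕ) :
    (coeff α (swap Q)).natDegree ≤ Q.natDegree :=
  Polynomial.natDegree_le_iff_coeff_eq_zero.2 fun k hk => by
    rw [coeff_coeff_swap, Polynomial.coeff_eq_zero_of_natDegree_lt hk, coeff_zero]

theorem eval_constantCoeff_swap (Q : Polynomial (MvPolynomial σ R)) (t : R) :
    (constantCoeff (swap Q)).eval t = constantCoeff (Q.eval (C t)) := by
  induction Q using Polynomial.induction_on' with
  | add P Q hP hQ => simp [hP, hQ]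
  | monomial l P => simp [swap, constantCoeff_map]

theorem X_sub_C_pow_dvd_coeff_swap {Q : Polynomial (MvPolynomial σ R)} {t : R} {M : ℕ}
    (hQ : Q ∈ RingHom.ker (constantCoeff.comp (Polynomial.evalRingHom (C t))) ^ M) (α : σ →₀ ℕ) :
    (Polynomial.X - Polynomial.C t) ^ (M - α.degree) ∣ coeff α (swap Q) := by
  rw [← Ideal.mem_span_singleton, ← Ideal.span_singleton_pow, ← Polynomial.ker_evalRingHom]
  refine coeff_mem_pow_of_mem_pow_comap_constantCoeff (map_mem_pow (fun P hP => ?_) hQ) α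
  simpa [RingHom.mem_ker, eval_constantCoeff_swap] using hP

theorem X_sub_C_pow_dvd_coeff_swap_of_dvd {Q : Polynomial (MvPolynomial σ R)} {t : R} {M : ℕ}
    (hQ : (Polynomial.X - Polynomial.C (C t)) ^ M ∣ Q) (α : σ →₀ ℕ) :
    (Polynomial.X - Polynomial.C t) ^ M ∣ coeff α (swap Q) := by
  obtain ⟨Q', rfl⟩ := hQ
  have hswap : swap (Polynomial.X - Polynomial.C (C t) : Polynomial (MvPolynomial σ R)) =
      C (Polynomial.X - Polynomial.C t) := by
    simp [swap]
  rw [map_mul, map_pow, hswap, ← C_pow, coeff_C_mul]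
  exact dvd_mul_right _ _

end Swap

theorem eq_zero_of_natDegree_lt_sum {K : Type*} [Field K] [Fintype K] {c : Polynomial K}
    {e : K → ℕ} (hdvd : ∀ t, (Polynomial.X - Polynomial.C t) ^ e t ∣ c)
    (hdeg : c.natDegree < ∑ t, e t) : c = 0 := by
  have hprod : ∏ t, (Polynomial.X - Polynomial.C t) ^ e t ∣ c :=
    Finset.prod_dvd_of_coprime (fun s _ t _ hst => (Polynomial.isCoprime_X_sub_C_of_isUnit_sub
      (sub_ne_zero.2 hst).isUnit).pow) fun t _ => hdvd t
  refine Polynomial.eq_zero_of_dvd_of_natDegree_lt hprod (hdeg.trans_eq ?_)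
  rw [Polynomial.natDegree_prod_of_monic _ _ fun t _ => (Polynomial.monic_X_sub_C t).pow _]
  simp

theorem constantCoeff_eval_map_translate {R : Type*} [CommRing R] {n : ℕ} (t : R) (a : Fin n → R)
    (P : MvPolynomial (Fin (n + 1)) R) :
    constantCoeff (((finSuccEquiv R n P).map (translate a).toRingHom).eval (C t)) =
      eval (Fin.cons t a : Fin (n + 1) → R) P := by
  rw [eval_eq_eval_mv_eval']
  generalize finSuccEquiv R n P = Q
  induction Q using Polynomial.induction_on' with
  | add P Q hP hQ => simp_all
  | monomial l P => simp

theorem eq_zero_of_forall_mem_pow_pointIdeal {K : Type*} [Field K] [Fintype K] {n r : ℕ}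
    {P : MvPolynomial (Fin n) K} (hdeg : P.totalDegree < r * Fintype.card K)
    (hP : ∀ b, P ∈ pointIdeal b ^ r) : P = 0 := by
  induction n generalizing r with
  | zero =>
    have hr : r ≠ 0 := by rintro rfl; simp at hdeg
    obtain ⟨c, rfl⟩ := C_surjective (Fin 0) P
    simpa [pointIdeal] using Ideal.pow_le_self hr (hP 0)
  | succ n ih =>
    by_contra hP0
    set q := Fintype.card K
    set Q := finSuccEquiv K n P
    have hL : Q.leadingCoeff ≠ 0 := by simpa [Q] using hP0
    have hLdeg : Q.leadingCoeff.totalDegree + Q.natDegree ≤ P.totalDegree :=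
      totalDegree_coeff_finSuccEquiv_add_le P _ hL
    refine hL (ih (r := r - Q.natDegree / q) ?_ fun a => mem_pow_pointIdeal_iff.2 fun α hα => ?_)
    · have := Nat.div_mul_le_self Q.natDegree q
      rw [Nat.sub_mul]
      lia
    · set Qa := Q.map (translate a).toRingHom
      have hQa : coeff α (swap Qa) = 0 := by
        refine eq_zero_of_natDegree_lt_sum (e := fun _ => r - α.degree) (fun t => ?_) ?_
        · refine X_sub_C_pow_dvd_coeff_swap (map_mem_pow (f := (Polynomial.mapRingHom
            (translate a).toRingHom).comp (finSuccEquiv K n).toRingHom) (fun A hA => ?_)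
            (hP (Fin.cons t a))) α
          exact (constantCoeff_eval_map_translate t a A).trans hA
        · calc (coeff α (swap Qa)).natDegree
              ≤ Q.natDegree := (natDegree_coeff_swap_le _ _).trans Polynomial.natDegree_map_le
            _ < (r - α.degree) * q := (Nat.div_lt_iff_lt_mul Fintype.card_pos).1 (by lia)
            _ = ∑ _ : K, (r - α.degree) := by simp [q, mul_comm]
      have := coeff_coeff_swap Qa α Q.natDegree
      rw [hQa, Polynomial.coeff_zero, Polynomial.coeff_map] at this
      exact this.symm

section GenericLine

variable {σ R : Type*} [CommRing R]

/-- The restriction `P(a + T(X + u))` of `P` to the line through `a` in the generic direction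
`X + u` infinitesimally close to `u`, as a polynomial in the parameter `T`. -/
noncomputable def genericLine (a u : σ → R) :
    MvPolynomial σ R →ₐ[R] Polynomial (MvPolynomial σ R) :=
  aeval fun i => Polynomial.C (C (a i)) + Polynomial.C (X i + C (u i)) * Polynomial.X

theorem constantCoeff_eval_genericLine (a u : σ → R) (t : R) (P : MvPolynomial σ R) :
    constantCoeff ((genericLine a u P).eval (C t)) = eval (a + t • u) P := by
  induction P using MvPolynomial.induction_on <;>
    simp_all [genericLine, mul_comm, MvPolynomial.algebraMap_eq]

theorem eval_zero_genericLine (a u : σ → R) (P : MvPolynomial σ R) :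
    (genericLine a u P).eval 0 = C (eval a P) := by
  induction P using MvPolynomial.induction_on <;>
    simp_all [genericLine]

theorem natDegree_genericLine_le (a u : σ → R) (P : MvPolynomial σ R) :
    (genericLine a u P).natDegree ≤ P.totalDegree := by
  rw [genericLine, ← aeval_map_algebraMap (MvPolynomial σ R)]
  refine (aeval_natDegree_le (n := 1) _ (Finset.sup_mono (support_map_subset _ P)) _
    fun i => ?_).trans_eq (mul_one _)
  compute_degree

theorem prod_map_toMultiset {N : Type*} [CommMonoid N] (α : σ →₀ ℕ) (h : σ → N) :
    (α.toMultiset.map h).prod = α.prod fun i k => h i ^ k := by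
  rw [Finsupp.toMultiset_map, Finsupp.prod_toMultiset,
    Finsupp.prod_mapDomain_index (fun _ => pow_zero _) fun _ _ _ => pow_add _ _ _]

theorem coeff_degree_finsuppProd {S : Type*} [CommSemiring S] {ℓ : σ → Polynomial S}
    (hℓ : ∀ i, (ℓ i).natDegree ≤ 1) (α : σ →₀ ℕ) :
    (α.prod fun i k => ℓ i ^ k).coeff α.degree = α.prod fun i k => (ℓ i).coeff 1 ^ k := by
  have hcoeff := Polynomial.coeff_multiset_prod_of_natDegree_le (α.toMultiset.map ℓ) 1
    (by simpa using fun i _ => hℓ i)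
  rwa [Multiset.card_map, Finsupp.card_toMultiset, mul_one, Multiset.map_map, prod_map_toMultiset,
    prod_map_toMultiset] at hcoeff

theorem coeff_degree_genericLine_monomial (a u : σ → R) (α : σ →₀ ℕ) (c : R) :
    (genericLine a u (monomial α c)).coeff α.degree = translate u (monomial α c) := by
  have hlinear (i : σ) :
      (Polynomial.C (C (a i)) + Polynomial.C (X i + C (u i)) * Polynomial.X :
        Polynomial (MvPolynomial σ R)).natDegree ≤ 1 := by
    compute_degree
  rw [genericLine, translate, aeval_monomial, aeval_monomial, Polynomial.algebraMap_apply,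
    Polynomial.coeff_C_mul, coeff_degree_finsuppProd hlinear]
  simp

theorem coeff_genericLine (a u : σ → R) {P : MvPolynomial σ R} {D : ℕ} (hP : P.totalDegree ≤ D) :
    (genericLine a u P).coeff D = translate u (homogeneousComponent D P) := by
  conv_lhs => rw [P.as_sum]
  rw [homogeneousComponent_apply, Finset.sum_filter, map_sum, map_sum,
    Polynomial.finsetSum_coeff]
  refine Finset.sum_congr rfl fun α hα => ?_
  split_ifs with hαD
  · rw [← hαD, coeff_degree_genericLine_monomial]
  · have hαP : α.degree ≤ P.totalDegree := le_totalDegree hα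
    have hdeg : (genericLine a u (monomial α (coeff α P))).natDegree ≤ α.degree :=
      (natDegree_genericLine_le a u _).trans (totalDegree_monomial_le α _)
    rw [map_zero, Polynomial.coeff_eq_zero_of_natDegree_lt (by lia)]

theorem X_pow_dvd_genericLine {a : σ → R} {M : ℕ} {P : MvPolynomial σ R}
    (hP : P ∈ pointIdeal a ^ M) (u : σ → R) : Polynomial.X ^ M ∣ genericLine a u P := by
  rw [← Ideal.mem_span_singleton, ← Ideal.span_singleton_pow]
  refine map_mem_pow (f := (genericLine a u).toRingHom) (fun Q hQ => ?_) hP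
  have hQ : eval a Q = 0 := hQ
  simp [Ideal.mem_span_singleton, Polynomial.X_dvd_iff, Polynomial.coeff_zero_eq_eval_zero,
    eval_zero_genericLine, hQ]

theorem X_sub_C_pow_dvd_coeff_swap_genericLine {a u : σ → R} {t : R} {M : ℕ}
    {P : MvPolynomial σ R} (hP : P ∈ pointIdeal (a + t • u) ^ M) (α : σ →₀ ℕ) :
    (Polynomial.X - Polynomial.C t) ^ (M - α.degree) ∣ coeff α (swap (genericLine a u P)) := by
  refine X_sub_C_pow_dvd_coeff_swap
    (map_mem_pow (f := (genericLine a u).toRingHom) (fun Q hQ => ?_) hP) α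
  have hQ : eval (a + t • u) Q = 0 := hQ
  simp [RingHom.mem_ker, constantCoeff_eval_genericLine, hQ]

theorem homogeneousComponent_eq_zero_of_mem_pow_pointIdeal {a : σ → R} {D M : ℕ}
    {P : MvPolynomial σ R} (hDM : D < M) (hdeg : P.totalDegree ≤ D) (hP : P ∈ pointIdeal a ^ M) :
    homogeneousComponent D P = 0 := by
  obtain ⟨Q, hQ⟩ := X_pow_dvd_genericLine hP 0
  rw [← translate_neg_translate 0 (homogeneousComponent D P), ← coeff_genericLine a 0 hdeg, hQ,
    Polynomial.coeff_X_pow_mul', if_neg hDM.not_ge, map_zero]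

theorem homogeneousComponent_mem_pow_pointIdeal {K : Type*} [Field K] [Fintype K]
    {P : MvPolynomial σ K} {D r : ℕ} (hDr : D < r * Fintype.card K) (hdeg : P.totalDegree ≤ D)
    {g : (σ → K) → ℕ} (hP : ∀ x, P ∈ pointIdeal x ^ g x) {a u : σ → K}
    (hline : (2 * Fintype.card K - 1) * r ≤ ∑ t : K, g (a + t • u)) :
    homogeneousComponent D P ∈ pointIdeal u ^ r := by
  classical
  refine mem_pow_pointIdeal_iff.2 fun α hα => ?_
  set loss : K → ℕ := fun t => if t = 0 then 0 else α.degree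
  have hloss : ∑ t, loss t = (Fintype.card K - 1) * α.degree := by
    simp [loss, Finset.sum_ite, Finset.filter_ne', Finset.card_erase_of_mem]
  have hzero : coeff α (swap (genericLine a u P)) = 0 := by
    refine eq_zero_of_natDegree_lt_sum (e := fun t => g (a + t • u) - loss t) (fun t => ?_) ?_
    · obtain rfl | ht := eq_or_ne t 0
      · have := X_pow_dvd_genericLine (hP a) u
        exact X_sub_C_pow_dvd_coeff_swap_of_dvd (by simpa [loss] using this) α
      · simpa only [loss, if_neg ht] using X_sub_C_pow_dvd_coeff_swap_genericLine (hP _) α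
    · have hsum : ∑ t : K, g (a + t • u) ≤
          ∑ t, (g (a + t • u) - loss t) + (Fintype.card K - 1) * α.degree := by
        rw [← hloss, ← Finset.sum_add_distrib]
        exact Finset.sum_le_sum fun t _ => le_tsub_add
      have hsplit : (2 * Fintype.card K - 1) * r =
          r * Fintype.card K + (Fintype.card K - 1) * r := by
        rw [mul_comm r, ← add_mul]
        congr 1
        have := Fintype.card_pos (α := K)
        lia
      have hloss_le := Nat.mul_le_mul_left (Fintype.card K - 1) hα.le
      have := (natDegree_coeff_swap_le _ α).trans (natDegree_genericLine_le a u P)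
      lia
  rw [← coeff_genericLine a u hdeg, ← coeff_coeff_swap, hzero, Polynomial.coeff_zero]

end GenericLine

section Submodular

open scoped Pointwise

variable {ι : Type*} [DecidableEq ι]

theorem exists_additive_le_of_submodular {ρ : Finset ι → ℤ} (hempty : ρ ∅ = 0)
    (hsub : ∀ S T, ρ (S ∪ T) + ρ (S ∩ T) ≤ ρ S + ρ T) (U : Finset ι) :
    ∃ δ : ι → ℤ, ∑ i ∈ U, δ i = ρ U ∧ ∀ T ⊆ U, ∑ i ∈ T, δ i ≤ ρ T := by
  induction U using Finset.induction_on with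
  | empty => exact ⟨0, by simp [hempty], fun T hT => by simp [Finset.subset_empty.1 hT, hempty]⟩
  | insert a U ha ih =>
    obtain ⟨δ, hδU, hδ⟩ := ih
    set δ' := Function.update δ a (ρ (insert a U) - ρ U)
    have hδ'a : δ' a = ρ (insert a U) - ρ U := Function.update_self ..
    have hδ' {T : Finset ι} (hT : a ∉ T) : ∑ i ∈ T, δ' i = ∑ i ∈ T, δ i :=
      Finset.sum_congr rfl fun i hi => Function.update_of_ne (ne_of_mem_of_not_mem hi hT) _ _
    refine ⟨δ', ?_, fun T hT => ?_⟩
    · rw [Finset.sum_insert ha, hδ' ha, hδU, hδ'a, sub_add_cancel]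
    · rw [Finset.subset_insert_iff] at hT
      by_cases haT : a ∈ T
      · have hinter : T ∩ U = T.erase a := by grind
        have hunion : T ∪ U = insert a U := by grind
        have := hsub T U
        rw [hinter, hunion] at this
        rw [← Finset.add_sum_erase T δ' haT, hδ' (Finset.notMem_erase a T), hδ'a]
        linarith [hδ _ hT]
      · rw [hδ' haT]
        exact hδ T (Finset.erase_eq_of_notMem haT ▸ hT)

theorem card_mul_le_card_mul_of_submodular {G : Type*} [Group G] [Finite G] [MulAction G ι]
    {ρ : Finset ι → ℤ} (hempty : ρ ∅ = 0) (hsub : ∀ S T, ρ (S ∪ T) + ρ (S ∩ T) ≤ ρ S + ρ T)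
    (hsmul : ∀ (g : G) T, ρ (g • T) ≤ ρ T) {U : Finset ι} (hU : ∀ g : G, g • U = U)
    (htrans : ∀ u ∈ U, ∀ v ∈ U, ∃ g : G, g • u = v) {T : Finset ι} (hT : T ⊆ U) :
    T.card * ρ U ≤ U.card * ρ T := by
  obtain ⟨δ, hδU, hδ⟩ := exists_additive_le_of_submodular hempty hsub U
  cases nonempty_fintype G
  set avg : ι → ℤ := fun u => ∑ g : G, δ (g • u)
  have sum_avg (S : Finset ι) : ∑ u ∈ S, avg u = ∑ g : G, ∑ u ∈ g • S, δ u := by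
    rw [Finset.sum_comm]
    refine Finset.sum_congr rfl fun g _ => ?_
    rw [Finset.smul_finset_def, Finset.sum_image (MulAction.injective g).injOn]
  obtain ⟨c, hc⟩ : ∃ c, ∀ u ∈ U, avg u = c := by
    obtain rfl | ⟨u₀, hu₀⟩ := U.eq_empty_or_nonempty
    · simp
    · refine ⟨avg u₀, fun u hu => ?_⟩
      obtain ⟨h, rfl⟩ := htrans u₀ hu₀ u hu
      exact Fintype.sum_equiv (Equiv.mulRight h) _ _ fun g => by simp [mul_smul]
  have hsumU : U.card * c = Fintype.card G * ρ U := by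
    rw [← nsmul_eq_mul, ← Finset.sum_const, ← Finset.sum_congr rfl hc, sum_avg]
    simp [hU, hδU]
  have hsumT : T.card * c ≤ Fintype.card G * ρ T := by
    rw [← nsmul_eq_mul, ← Finset.sum_const, ← Finset.sum_congr rfl fun u hu => hc u (hT hu),
      sum_avg, ← nsmul_eq_mul, ← Finset.card_univ, ← Finset.sum_const]
    exact Finset.sum_le_sum fun g _ =>
      (hδ _ (hU g ▸ Finset.smul_finset_subset_smul_finset hT)).trans (hsmul g T)
  have hG : (0 : ℤ) < Fintype.card G := mod_cast Fintype.card_pos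
  refine le_of_mul_le_mul_left ?_ hG
  calc Fintype.card G * (T.card * ρ U) = U.card * (T.card * c) := by
        rw [mul_left_comm, ← hsumU, mul_left_comm]
    _ ≤ U.card * (Fintype.card G * ρ T) := by gcongr
    _ = Fintype.card G * (U.card * ρ T) := mul_left_comm _ _ _

end Submodular

section Codimension

open scoped Pointwise

variable {K V W : Type*} [Field K] [AddCommGroup V] [Module K V] [AddCommGroup W] [Module K W]

theorem finrank_inf_inf_add_le {ι : Type*} [DecidableEq ι] (A : Submodule K V)
    [FiniteDimensional K A] (B : ι → Submodule K V) (S T : Finset ι) :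
    finrank K ↥(A ⊓ S.inf B) + finrank K ↥(A ⊓ T.inf B) ≤
      finrank K ↥(A ⊓ (S ∪ T).inf B) + finrank K ↥(A ⊓ (S ∩ T).inf B) := by
  have hfin (T : Finset ι) : FiniteDimensional K ↥(A ⊓ T.inf B) :=
    Submodule.finiteDimensional_of_le inf_le_left
  rw [← Submodule.finrank_sup_add_finrank_inf_eq, ← inf_inf_distrib_left, ← Finset.inf_union,
    add_comm]
  refine add_le_add_right (Submodule.finrank_mono (sup_le ?_ ?_)) _
  · exact inf_le_inf_left _ (Finset.inf_mono Finset.inter_subset_left)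
  · exact inf_le_inf_left _ (Finset.inf_mono Finset.inter_subset_right)

theorem finrank_inf_inf_le_smul {ι G : Type*} [DecidableEq ι] [SMul G ι] {A : Submodule K V}
    [FiniteDimensional K A] {B : ι → Submodule K V} {g : G} {φ : V →ₗ[K] V}
    (hφ : Function.Injective φ) (hA : A.map φ ≤ A) (hB : ∀ i, (B i).map φ ≤ B (g • i))
    (T : Finset ι) : finrank K ↥(A ⊓ T.inf B) ≤ finrank K ↥(A ⊓ (g • T).inf B) := by
  have : FiniteDimensional K ↥(A ⊓ (g • T).inf B) := Submodule.finiteDimensional_of_le inf_le_left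
  rw [LinearEquiv.finrank_eq (Submodule.equivMapOfInjective φ hφ (A ⊓ T.inf B))]
  refine Submodule.finrank_mono (le_inf ((Submodule.map_mono inf_le_left).trans hA) ?_)
  rw [Finset.smul_finset_def, Finset.inf_image, Finset.le_inf_iff]
  exact fun i hi => (Submodule.map_mono (inf_le_right.trans (Finset.inf_le hi))).trans (hB i)

theorem card_mul_finrank_add_le {ι G : Type*} [DecidableEq ι] [Group G] [Finite G]
    [MulAction G ι] (A : Submodule K V) [FiniteDimensional K A] (B : ι → Submodule K V)
    (hφ : ∀ g : G, ∃ φ : V →ₗ[K] V, Function.Injective φ ∧ A.map φ ≤ A ∧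
      ∀ i, (B i).map φ ≤ B (g • i))
    {U : Finset ι} (hU : ∀ g : G, g • U = U) (htrans : ∀ u ∈ U, ∀ v ∈ U, ∃ g : G, g • u = v)
    (hbot : A ⊓ U.inf B = ⊥) {T : Finset ι} (hT : T ⊆ U) :
    T.card * finrank K A + U.card * finrank K ↥(A ⊓ T.inf B) ≤ U.card * finrank K A := by
  have hempty : (finrank K A : ℤ) - finrank K ↥(A ⊓ (∅ : Finset ι).inf B) = 0 := by
    rw [Finset.inf_empty, inf_top_eq, sub_self]
  have key := card_mul_le_card_mul_of_submodular (G := G)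
    (ρ := fun T => (finrank K A : ℤ) - finrank K ↥(A ⊓ T.inf B)) hempty
    (fun S T => by have := finrank_inf_inf_add_le A B S T; lia)
    (fun g T => by
      obtain ⟨φ, hinj, hA, hB⟩ := hφ g
      have := finrank_inf_inf_le_smul hinj hA hB T
      lia) hU htrans hT
  rw [hbot, finrank_bot, Nat.cast_zero, sub_zero, mul_sub, le_sub_iff_add_le] at key
  exact_mod_cast key

theorem finrank_map_add_finrank_inf_ker (E : V →ₗ[K] W) (A : Submodule K V)
    [FiniteDimensional K A] : finrank K (A.map E) + finrank K ↥(A ⊓ LinearMap.ker E) =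
      finrank K A := by
  have h := LinearMap.finrank_range_add_finrank_ker (E.domRestrict A)
  rw [LinearMap.range_domRestrict, LinearMap.ker_domRestrict] at h
  rw [← h, ← Submodule.map_comap_subtype, Submodule.finrank_map_subtype_eq]

theorem finrank_add_finrank_eq_finrank_sup_map_add (E : V →ₗ[K] W) (A : Submodule K V)
    [FiniteDimensional K A] (B : Submodule K W) [FiniteDimensional K B] :
    finrank K B + finrank K A = finrank K ↥(B ⊔ A.map E) + finrank K ↥(A ⊓ B.comap E) := by
  have hA := finrank_map_add_finrank_inf_ker (B.mkQ ∘ₗ E) A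
  have hB := finrank_map_add_finrank_inf_ker B.mkQ (B ⊔ A.map E)
  rw [LinearMap.ker_comp, Submodule.ker_mkQ, Submodule.map_comp] at hA
  rw [Submodule.ker_mkQ, Submodule.map_sup, Submodule.mkQ_map_self, bot_sup_eq,
    inf_eq_right.2 le_sup_left] at hB
  lia

end Codimension

section LinearSubst

variable {σ R : Type*} [Fintype σ] [DecidableEq σ] [CommRing R]

/-- The substitution `P ↦ P ∘ g` of a linear map `g` into polynomials. -/
noncomputable def linearSubst (g : (σ → R) →ₗ[R] (σ → R)) :
    MvPolynomial σ R →ₐ[R] MvPolynomial σ R :=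
  bind₁ (LinearMap.toMatrix' g).toMvPolynomial

theorem eval_linearSubst (g : (σ → R) →ₗ[R] (σ → R)) (u : σ → R) (P : MvPolynomial σ R) :
    eval u (linearSubst g P) = eval (g u) P := by
  induction P using MvPolynomial.induction_on <;>
    simp_all [linearSubst, Matrix.toMvPolynomial_eval_eq_apply]

theorem linearSubst_linearSubst (g h : (σ → R) →ₗ[R] (σ → R)) (P : MvPolynomial σ R) :
    linearSubst g (linearSubst h P) = linearSubst (h ∘ₗ g) P := by
  rw [linearSubst, linearSubst, linearSubst, bind₁_bind₁, LinearMap.toMatrix'_comp]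
  simp only [← Matrix.toMvPolynomial_mul]

theorem linearSubst_injective (g : (σ → R) ≃ₗ[R] (σ → R)) :
    Function.Injective (linearSubst (g : (σ → R) →ₗ[R] (σ → R))) := by
  refine Function.LeftInverse.injective (g := linearSubst g.symm.toLinearMap) fun P => ?_
  rw [linearSubst_linearSubst, LinearEquiv.comp_coe, LinearEquiv.symm_trans_self]
  simp [linearSubst]

theorem isHomogeneous_linearSubst (g : (σ → R) →ₗ[R] (σ → R)) {P : MvPolynomial σ R} {D : ℕ}
    (hP : P.IsHomogeneous D) : (linearSubst g P).IsHomogeneous D :=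
  one_mul D ▸ hP.aeval _ (Matrix.toMvPolynomial_isHomogeneous _)

theorem linearSubst_mem_pow_pointIdeal {g : (σ → R) →ₗ[R] (σ → R)} {u : σ → R} {r : ℕ}
    {P : MvPolynomial σ R} (hP : P ∈ pointIdeal (g u) ^ r) :
    linearSubst g P ∈ pointIdeal u ^ r :=
  map_mem_pow (f := (linearSubst g).toRingHom) (J := pointIdeal u)
    (fun Q (hQ : eval (g u) Q = 0) => (eval_linearSubst g u Q).trans hQ) hP

end LinearSubst

theorem exists_linearEquiv_apply_eq {K V : Type*} [Field K] [AddCommGroup V] [Module K V]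
    {u v : V} (hu : u ≠ 0) (hv : v ≠ 0) : ∃ g : V ≃ₗ[K] V, g u = v := by
  let lineEquiv := (LinearEquiv.toSpanNonzeroSingleton K V u hu).symm ≪≫ₗ
    LinearEquiv.toSpanNonzeroSingleton K V v hv
  obtain ⟨g, hg⟩ := Submodule.exists_linearEquiv_restrict_eq lineEquiv
  refine ⟨g, ?_⟩
  have h := hg (LinearEquiv.toSpanNonzeroSingleton K V u hu 1)
  simp only [lineEquiv, LinearEquiv.trans_apply, LinearEquiv.symm_apply_apply] at h
  simpa using h.symm

section Homogeneous

variable {R : Type*} [CommRing R]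

instance finite_homogeneousSubmodule {σ : Type*} [Finite σ] (D : ℕ) :
    Module.Finite R (homogeneousSubmodule σ R D) :=
  Module.Finite.iff_fg.2 (homogeneousSubmodule_fg σ R D)

theorem finrank_homogeneousSubmodule [Nontrivial R] {σ : Type*} [Fintype σ] (D : ℕ) :
    finrank R (homogeneousSubmodule σ R D) = (Fintype.card σ).multichoose D := by
  classical
  have hsupport : homogeneousSubmodule σ R D =
      restrictSupport R ((Finset.univ : Finset σ).finsuppAntidiag D) := by
    refine (homogeneousSubmodule_eq_finsupp_supported σ R D).trans (congrArg _ ?_)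
    ext α
    simp [Finset.mem_finsuppAntidiag, Finsupp.degree_eq_sum]
  rw [hsupport, finrank_eq_nat_card_basis (basisRestrictSupport R _), Nat.card_coe_set_eq,
    Set.ncard_coe_finset, Finset.card_finsuppAntidiag_nat_eq_multichoose, Finset.card_univ]

variable {K : Type*} [Field K] [Fintype K] {n : ℕ} {D r : ℕ}

theorem eq_zero_of_isHomogeneous_of_mem_pow_pointIdeal {P : MvPolynomial (Fin n) K}
    (hn : 1 ≤ n) (hP : P.IsHomogeneous D) (hDr : D < r * Fintype.card K)
    (hmem : ∀ u ≠ 0, P ∈ pointIdeal u ^ r) : P = 0 := by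
  obtain hlt | hle := lt_or_ge D r
  · have : Nonempty (Fin n) := ⟨⟨0, hn⟩⟩
    rw [← homogeneousComponent_eq_self hP]
    exact homogeneousComponent_eq_zero_of_mem_pow_pointIdeal hlt hP.totalDegree_le
      (hmem 1 one_ne_zero)
  · refine eq_zero_of_forall_mem_pow_pointIdeal (hP.totalDegree_le.trans_lt hDr)
      fun b => ?_
    obtain rfl | hb := eq_or_ne b 0
    · refine mem_pow_pointIdeal_iff.2 fun α hα => ?_
      have : translate (0 : Fin n → K) P = P := by simp [translate]
      rw [this]
      exact hP.coeff_eq_zero (hα.trans_le hle).ne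
    · exact hmem b hb

open scoped Pointwise in
theorem card_mul_finrank_homogeneousSubmodule_add_le [DecidableEq K] (hn : 1 ≤ n)
    (hDr : D < r * Fintype.card K) {T : Finset (Fin n → K)} (hT : ∀ u ∈ T, u ≠ 0) :
    T.card * finrank K (homogeneousSubmodule (Fin n) K D) + Finset.card {u : Fin n → K | u ≠ 0} *
        finrank K ↥(homogeneousSubmodule (Fin n) K D ⊓
          T.inf fun u => (pointIdeal u ^ r).restrictScalars K) ≤
      Finset.card {u : Fin n → K | u ≠ 0} * finrank K (homogeneousSubmodule (Fin n) K D) := by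
  have : Finite ((Fin n → K) ≃ₗ[K] (Fin n → K)) := DFunLike.finite _
  refine card_mul_finrank_add_le (G := (Fin n → K) ≃ₗ[K] (Fin n → K)) _ _ (fun g => ?_)
    (fun g => ?_) (fun u hu v hv => ?_) (eq_bot_iff.2 fun P hP => ?_) fun u hu => by simp [hT u hu]
  · refine ⟨(linearSubst g.symm.toLinearMap).toLinearMap, linearSubst_injective g.symm,
      Submodule.map_le_iff_le_comap.2 fun P => isHomogeneous_linearSubst _, fun u => ?_⟩
    refine Submodule.map_le_iff_le_comap.2 fun P hP => linearSubst_mem_pow_pointIdeal ?_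
    simpa using hP
  · ext u
    simp [← Finset.inv_smul_mem_iff]
  · exact exists_linearEquiv_apply_eq (Finset.mem_filter.1 hu).2 (Finset.mem_filter.1 hv).2
  · rw [Submodule.mem_inf, Submodule.mem_finsetInf] at hP
    exact eq_zero_of_isHomogeneous_of_mem_pow_pointIdeal hn hP.1 hDr
      fun u hu => hP.2 u (by simp [hu])

end Homogeneous

section Jets

variable {R : Type*} [CommRing R]

/-- The jets of a polynomial: its Hasse derivatives of order less than `g x` at each point `x`. -/
noncomputable def jets {σ : Type*} [Fintype σ] [DecidableEq σ] (g : (σ → R) → ℕ) :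
    MvPolynomial σ R →ₗ[R]
      ((x : σ → R) → (j : Fin (g x)) → (Finset.univ : Finset σ).finsuppAntidiag (j : ℕ) → R) :=
  LinearMap.pi fun x => LinearMap.pi fun _ => LinearMap.pi fun α =>
    lcoeff R (α : σ →₀ ℕ) ∘ₗ (translate x).toLinearMap

/-- The space of the polynomials of degree less than `D`. -/
noncomputable def degreeLT (σ R : Type*) [CommRing R] (D : ℕ) : Submodule R (MvPolynomial σ R) :=
  restrictSupport R {α | α.degree < D}

theorem mem_pow_pointIdeal_of_jets_eq_zero {σ : Type*} [Fintype σ] [DecidableEq σ]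
    {g : (σ → R) → ℕ} {P : MvPolynomial σ R} (hP : jets g P = 0) (x : σ → R) :
    P ∈ pointIdeal x ^ g x := by
  refine mem_pow_pointIdeal_iff.2 fun α hα => ?_
  have hmem : α ∈ (Finset.univ : Finset σ).finsuppAntidiag α.degree := by
    simp [Finset.mem_finsuppAntidiag, Finsupp.degree_eq_sum]
  exact congrFun (congrFun (congrFun hP x) ⟨α.degree, hα⟩) ⟨α, hmem⟩

theorem finrank_jets_codomain {σ : Type*} [Fintype σ] [DecidableEq σ] [Fintype R] [Nontrivial R]
    (g : (σ → R) → ℕ) : finrank R ((x : σ → R) → (j : Fin (g x)) →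
        (Finset.univ : Finset σ).finsuppAntidiag (j : ℕ) → R) =
      ∑ x, ∑ j ∈ Finset.range (g x), (Fintype.card σ).multichoose j := by
  simp [finrank_pi_fintype, Finset.card_finsuppAntidiag_nat_eq_multichoose, Finset.sum_range]

theorem degreeLT_sup_homogeneousSubmodule_le (σ : Type*) (D : ℕ) :
    degreeLT σ R D ⊔ homogeneousSubmodule σ R D ≤ degreeLT σ R (D + 1) := by
  rw [homogeneousSubmodule_eq_finsupp_supported]
  exact sup_le (restrictSupport_mono R fun _ => Nat.lt_succ_of_lt)
    (restrictSupport_mono R fun α (hα : α.degree = D) => Nat.lt_succ_of_le hα.le)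

theorem homogeneousComponent_sub_of_mem_degreeLT {σ : Type*} {D : ℕ} {P Q : MvPolynomial σ R}
    (hP : P.IsHomogeneous D) (hQ : Q ∈ degreeLT σ R D) :
    homogeneousComponent D (P - Q) = P := by
  have hQ0 : homogeneousComponent D Q = 0 :=
    homogeneousComponent_eq_zero' _ _ fun α hα => (hQ hα).ne
  rw [map_sub, hQ0, sub_zero, homogeneousComponent_eq_self hP]

theorem totalDegree_le_of_mem_degreeLT {σ : Type*} {D : ℕ} {P : MvPolynomial σ R}
    (hP : P ∈ degreeLT σ R (D + 1)) : P.totalDegree ≤ D :=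
  Finset.sup_le fun _ hα => Nat.lt_succ_iff.1 (hP hα)

end Jets

theorem card_filter_ne_zero_and {K V : Type*} [Field K] [Finite K] [AddCommGroup V]
    [Module K V] [Fintype V] [DecidableEq V] {Pr : Finset V} (hPr0 : ∀ u ∈ Pr, u ≠ 0)
    (hPr : ∀ u : V, u ≠ 0 → ∃! v, v ∈ Pr ∧ ∃ c : Kˣ, u = (c : K) • v)
    {p : V → Prop} [DecidablePred p] (hp : ∀ (c : Kˣ) u, p ((c : K) • u) ↔ p u) :
    Finset.card {u | u ≠ 0 ∧ p u} = Nat.card Kˣ * (Pr.filter p).card := by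
  classical
  cases nonempty_fintype K
  rw [Nat.card_eq_fintype_card, ← Finset.card_univ, ← Finset.card_product]
  symm
  refine Finset.card_bij (fun cv _ => (cv.1 : K) • cv.2) ?_ ?_ ?_
  · simp only [Finset.mem_product, Finset.mem_univ, true_and, Finset.mem_filter, and_imp]
    exact fun ⟨c, v⟩ hv hpv => ⟨smul_ne_zero c.ne_zero (hPr0 v hv), (hp c v).2 hpv⟩
  · simp only [Finset.mem_product, Finset.mem_univ, true_and, Finset.mem_filter, and_imp]
    rintro ⟨c, v⟩ hv - ⟨c', v'⟩ hv' - (heq : (c : K) • v = (c' : K) • v')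
    obtain rfl : v = v' := (hPr _ (smul_ne_zero c.ne_zero (hPr0 v hv))).unique
      ⟨hv, c, rfl⟩ ⟨hv', c', heq⟩
    rw [Units.ext (smul_left_injective K (hPr0 v hv) heq)]
  · simp only [Finset.mem_filter, Finset.mem_univ, true_and, and_imp]
    intro u hu hpu
    obtain ⟨v, ⟨hv, c, rfl⟩, -⟩ := hPr u hu
    exact ⟨(c, v), by simp [hv, (hp c v).1 hpu], rfl⟩

section MaximalFunction

variable {F : Type*} [Field F] [Fintype F] {n : ℕ}

theorem card_mul_finrank_map_jets_add_le [DecidableEq F] (hn : 1 ≤ n) {g : (Fin n → F) → ℕ}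
    {D r : ℕ} (hDr : D < r * Fintype.card F) {T : Finset (Fin n → F)} (hT : ∀ u ∈ T, u ≠ 0)
    (hline : ∀ u ∈ T, ∃ a, (2 * Fintype.card F - 1) * r ≤ ∑ t : F, g (a + t • u)) :
    Finset.card {u : Fin n → F | u ≠ 0} * finrank F ((degreeLT (Fin n) F D).map (jets g)) +
        T.card * n.multichoose D ≤
      Finset.card {u : Fin n → F | u ≠ 0} *
        finrank F ((degreeLT (Fin n) F (D + 1)).map (jets g)) := by
  set A := homogeneousSubmodule (Fin n) F D
  set L := (degreeLT (Fin n) F D).map (jets g)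
  set B : (Fin n → F) → Submodule F (MvPolynomial (Fin n) F) :=
    fun u => (pointIdeal u ^ r).restrictScalars F
  have hvanish : A ⊓ L.comap (jets g) ≤ A ⊓ T.inf B := by
    rintro P ⟨hP, Q, hQ, hPQ⟩
    refine ⟨hP, (Submodule.mem_finsetInf (p := B)).2 fun u hu => ?_⟩
    obtain ⟨a, ha⟩ := hline u hu
    have hlower : P - Q ∈ degreeLT (Fin n) F (D + 1) :=
      degreeLT_sup_homogeneousSubmodule_le _ D
        (sub_mem (Submodule.mem_sup_right hP) (Submodule.mem_sup_left hQ))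
    rw [← homogeneousComponent_sub_of_mem_degreeLT hP hQ]
    exact homogeneousComponent_mem_pow_pointIdeal hDr (totalDegree_le_of_mem_degreeLT hlower)
      (mem_pow_pointIdeal_of_jets_eq_zero (by rw [map_sub, hPQ, sub_self])) ha
  have hgrowth : L ⊔ A.map (jets g) ≤ (degreeLT (Fin n) F (D + 1)).map (jets g) := by
    rw [← Submodule.map_sup]
    exact Submodule.map_mono (degreeLT_sup_homogeneousSubmodule_le _ D)
  have : FiniteDimensional F ↥(A ⊓ T.inf B) := Submodule.finiteDimensional_of_le inf_le_left
  have havg := card_mul_finrank_homogeneousSubmodule_add_le hn hDr hT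
  have hrank := finrank_add_finrank_eq_finrank_sup_map_add (jets g) A L
  have hA : finrank F A = n.multichoose D := by rw [finrank_homogeneousSubmodule, Fintype.card_fin]
  have hle : finrank F L + finrank F A ≤
      finrank F ((degreeLT (Fin n) F (D + 1)).map (jets g)) + finrank F ↥(A ⊓ T.inf B) :=
    hrank.trans_le (add_le_add (Submodule.finrank_mono hgrowth) (Submodule.finrank_mono hvanish))
  have hscale := Nat.mul_le_mul_left (Finset.card {u : Fin n → F | u ≠ 0}) hle
  rw [mul_add, mul_add] at hscale
  rw [← hA]
  linarith

theorem fstarF_smul (f : (Fin n → F) → ℕ) (c : Fˣ) (u : Fin n → F) :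
    fstarF f ((c : F) • u) = fstarF f u :=
  Finset.sup_congr rfl fun a _ =>
    Fintype.sum_equiv (Equiv.mulRight₀ (c : F) c.ne_zero) _ _ fun t => by simp [smul_smul]

theorem exists_le_sum_of_le_fstarF {f : (Fin n → F) → ℕ} {u : Fin n → F} {i : ℕ}
    (h : i ≤ fstarF f u) : ∃ a, i ≤ ∑ t : F, f (a + t • u) := by
  obtain ⟨a, -, ha⟩ := Finset.exists_mem_eq_sup Finset.univ Finset.univ_nonempty
    fun a : Fin n → F => ∑ t : F, f (a + t • u)
  exact ⟨a, h.trans_eq ha⟩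

theorem finrank_map_jets_add_le (hn : 1 ≤ n) {Pr : Finset (Fin n → F)}
    (hPr0 : ∀ u ∈ Pr, u ≠ 0)
    (hPr : ∀ u : Fin n → F, u ≠ 0 → ∃! v, v ∈ Pr ∧ ∃ c : Fˣ, u = (c : F) • v)
    {f : (Fin n → F) → ℕ} {m i D r : ℕ} (hDr : D < r * Fintype.card F)
    (hr : (2 * Fintype.card F - 1) * r ≤ m * i) :
    (finrank F ((degreeLT (Fin n) F D).map (jets fun x => m * f x)) : ℝ) +
        ((Pr.filter fun u => i ≤ fstarF f u).card : ℝ) / Pr.card * n.multichoose D ≤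
      finrank F ((degreeLT (Fin n) F (D + 1)).map (jets fun x => m * f x)) := by
  classical
  have hU := card_filter_ne_zero_and hPr0 hPr (p := fun _ => True) fun _ _ => Iff.rfl
  have hT := card_filter_ne_zero_and hPr0 hPr (p := fun u => i ≤ fstarF f u)
    fun c u => by rw [fstarF_smul]
  simp only [and_true, Finset.filter_true] at hU
  have key := card_mul_finrank_map_jets_add_le hn (g := fun x => m * f x) hDr
    (T := {u | u ≠ 0 ∧ i ≤ fstarF f u}) (fun u hu => (Finset.mem_filter.1 hu).2.1) fun u hu => by
      obtain ⟨a, ha⟩ := exists_le_sum_of_le_fstarF (Finset.mem_filter.1 hu).2.2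
      exact ⟨a, by rw [← Finset.mul_sum]; exact hr.trans (Nat.mul_le_mul_left m ha)⟩
  rw [hU, hT, mul_assoc, mul_assoc, mul_assoc, ← mul_add] at key
  have hcard : 0 < Pr.card := by
    have : Nonempty (Fin n) := ⟨⟨0, hn⟩⟩
    obtain ⟨v, ⟨hv, -⟩, -⟩ := hPr 1 one_ne_zero
    exact Finset.card_pos.2 ⟨v, hv⟩
  have hPrpos : (0 : ℝ) < Pr.card := mod_cast hcard
  have hdiv := Nat.le_of_mul_le_mul_left key Nat.card_pos
  refine le_of_mul_le_mul_left ?_ hPrpos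
  rw [mul_add, ← mul_assoc, mul_div_cancel₀ _ hPrpos.ne']
  exact_mod_cast hdiv

end MaximalFunction

section Summation

theorem sum_mul_sum_Ico_le {v φ ε : ℕ → ℝ} {N : ℕ → ℕ} (hN : Monotone N)
    (hstep : ∀ i, ∀ D < N (i + 1), v D + ε (i + 1) * φ D ≤ v (D + 1)) (w : ℕ) :
    v (N 0) + ∑ i ∈ Finset.Icc 1 w, ε i * ∑ j ∈ Finset.Ico (N (i - 1)) (N i), φ j ≤ v (N w) := by
  induction w with
  | zero => simp
  | succ i ih =>
    have hblock :
        ε (i + 1) * ∑ j ∈ Finset.Ico (N i) (N (i + 1)), φ j ≤ v (N (i + 1)) - v (N i) := by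
      rw [Finset.mul_sum, ← Finset.sum_Ico_sub v (hN i.le_succ)]
      refine Finset.sum_le_sum fun D hD => ?_
      linarith [hstep i D (Finset.mem_Ico.1 hD).2]
    rw [Finset.sum_Icc_succ_top (by lia), Nat.add_sub_cancel]
    linarith

theorem sum_Icc_cast_sub_one {M : Type*} [AddCommMonoid M] (φ : ℕ → M) (a b : ℕ) :
    ∑ j ∈ Finset.Icc (a : ℤ) (b - 1), φ j.toNat = ∑ j ∈ Finset.Ico a b, φ j := by
  refine Finset.sum_nbij' Int.toNat (↑) ?_ ?_ ?_ ?_ ?_ <;> simp <;> lia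

theorem ceil_succ_div_sub_one {N c : ℕ} (hc : 0 < c) :
    ⌈((N + 1 : ℕ) : ℝ) / c - 1⌉ = ((N / c : ℕ) : ℤ) := by
  have hc' : (0 : ℝ) < c := mod_cast hc
  have hlower : N / c * c < N + 1 := Nat.lt_succ_of_le (Nat.div_mul_le_self N c)
  have hupper : N + 1 ≤ (N / c + 1) * c := by
    rw [add_one_mul]
    exact Nat.lt_div_mul_add hc
  rw [Int.ceil_eq_iff]
  constructor
  · rw [Int.cast_natCast, sub_lt_sub_iff_right, lt_div_iff₀ hc']
    exact_mod_cast hlower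
  · rw [Int.cast_natCast, sub_le_iff_le_add, div_le_iff₀ hc']
    exact_mod_cast hupper

theorem multichoose_eq_choose_pred {n : ℕ} (hn : 1 ≤ n) (D : ℕ) :
    n.multichoose D = (D + n - 1).choose (n - 1) := by
  rw [Nat.multichoose_eq, add_comm n D]
  exact Nat.choose_symm_of_eq_add (by lia)

theorem sum_range_multichoose_eq_choose {n : ℕ} (hn : 1 ≤ n) (M : ℕ) :
    ∑ j ∈ Finset.range M, n.multichoose j = (M + n - 1).choose n := by
  cases M with
  | zero => simpa using (Nat.choose_eq_zero_of_lt (Nat.sub_lt hn one_pos)).symm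
  | succ M => rw [Nat.sum_range_multichoose, add_right_comm, Nat.add_sub_cancel]

end Summation

theorem finrank_map_jets_le {F : Type*} [Field F] [Fintype F] {n : ℕ} (hn : 1 ≤ n)
    (g : (Fin n → F) → ℕ) (L : Submodule F (MvPolynomial (Fin n) F)) :
    finrank F (L.map (jets g)) ≤ ∑ x, (g x + n - 1).choose n := by
  refine (Submodule.finrank_le _).trans_eq ?_
  simp only [finrank_jets_codomain, Fintype.card_fin, sum_range_multichoose_eq_choose hn]

theorem sum_mul_sum_multichoose_le {F : Type*} [Field F] [Fintype F] {n : ℕ} (hn : 1 ≤ n)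
    {Pr : Finset (Fin n → F)} (hPr0 : ∀ u ∈ Pr, u ≠ 0)
    (hPr : ∀ u : Fin n → F, u ≠ 0 → ∃! v, v ∈ Pr ∧ ∃ c : Fˣ, u = (c : F) • v)
    (f : (Fin n → F) → ℕ) (m w : ℕ) {r : ℕ → ℕ} (hmono : Monotone r)
    (hr : ∀ i, (2 * Fintype.card F - 1) * r i ≤ m * i) :
    ∑ i ∈ Finset.Icc 1 w, ((Pr.filter fun u => i ≤ fstarF f u).card : ℝ) / Pr.card *
        ∑ j ∈ Finset.Ico (r (i - 1) * Fintype.card F) (r i * Fintype.card F),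
          (n.multichoose j : ℝ) ≤
      ∑ x, ((m * f x + n - 1).choose n : ℝ) := by
  classical
  let v (D : ℕ) : ℕ := finrank F ((degreeLT (Fin n) F D).map (jets fun x => m * f x))
  let ε (i : ℕ) : ℝ := (Pr.filter fun u => i ≤ fstarF f u).card / Pr.card
  have hsum := sum_mul_sum_Ico_le (v := fun D => (v D : ℝ)) (φ := fun D => n.multichoose D) (ε := ε)
    (hmono.mul_const' (Fintype.card F))
    (fun i D hD => finrank_map_jets_add_le hn hPr0 hPr hD (hr (i + 1))) w
  have hv : (v (r w * Fintype.card F) : ℝ) ≤ ∑ x, ((m * f x + n - 1).choose n : ℝ) :=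
    mod_cast finrank_map_jets_le hn (fun x => m * f x) _
  exact (le_add_of_nonneg_left (Nat.cast_nonneg _)).trans (hsum.trans hv)

end KakeyaMaximal

open KakeyaMaximal in
theorem stmt8_general (F : Type*) [Field F] [Fintype F] (n : ℕ) (hn : 1 ≤ n)
    (q : ℕ) (hq : q = Fintype.card F)
    (Pr : Finset (Fin n → F)) (hPr0 : ∀ u ∈ Pr, u ≠ 0)
    (hPr : ∀ u : Fin n → F, u ≠ 0 → ∃! v, v ∈ Pr ∧ ∃ c : Fˣ, u = (c : F) • v)
    (f : (Fin n → F) → ℕ) (w m : ℕ)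
    (r : ℕ → ℤ) (hr : ∀ i : ℕ, r i = ⌈((m * i + 1 : ℕ) : ℝ) / (2 * (q : ℝ) - 1) - 1⌉)
    (d : ℕ → ℤ) (hd : ∀ i : ℕ, d i = r i * (q : ℤ) - 1) :
    ∑ i ∈ Finset.Icc 1 w,
        (((Pr.filter fun u => i ≤ fstarF f u).card : ℝ) / (Pr.card : ℝ)) *
          ∑ j ∈ Finset.Icc (d (i - 1) + 1) (d i), ((j.toNat + n - 1).choose (n - 1) : ℝ)
      ≤ ∑ x : Fin n → F, ((m * f x + n - 1).choose n : ℝ) := by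
  subst hq
  have hc : 0 < 2 * Fintype.card F - 1 := by have := Fintype.card_pos (α := F); lia
  have hcast : 2 * (Fintype.card F : ℝ) - 1 = (2 * Fintype.card F - 1 : ℕ) := by
    rw [Nat.cast_pred (by lia), Nat.cast_mul, Nat.cast_ofNat]
  have hd' (i : ℕ) :
      d i = (m * i / (2 * Fintype.card F - 1) * Fintype.card F : ℕ) - 1 := by
    rw [hd, hr, hcast, ceil_succ_div_sub_one hc, Nat.cast_mul]
  have hsum := sum_mul_sum_multichoose_le hn hPr0 hPr f m w
    (r := fun i => m * i / (2 * Fintype.card F - 1)) (fun i j hij => by dsimp only; gcongr)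
    fun i => Nat.mul_div_le _ _
  simpa only [hd', sub_add_cancel, multichoose_eq_choose_pred hn,
    sum_Icc_cast_sub_one fun j => ((j + n - 1).choose (n - 1) : ℝ)] using hsum

/- `Pr` plays the role of `ℙF_q^{n-1}` (fixed representatives of nonzero vectors up to
scalar multiples), `w = max_u f*(u)`, `ε_{≥i}` is written out as a ratio of cardinalities,
`r i = ⌈(m·i+1)/(2q−1) − 1⌉` and `d i = r i · q − 1` are integers. -/
theorem stmt8 (F : Type) [Field F] [Fintype F] [DecidableEq F] (n : ℕ) (hn : 1 ≤ n)
    (q : ℕ) (hq : q = Fintype.card F)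
    (Pr : Finset (Fin n → F)) (hPr0 : ∀ u ∈ Pr, u ≠ 0)
    (hPr : ∀ u : Fin n → F, u ≠ 0 → ∃! v, v ∈ Pr ∧ ∃ c : Fˣ, u = (c : F) • v)
    (f : (Fin n → F) → ℕ)
    (w : ℕ) (hw : w = Pr.sup (fstarF f))
    (m : ℕ) (hm : 2 * q ≤ m)
    (r : ℕ → ℤ) (hr : ∀ i : ℕ, r i = ⌈((m * i + 1 : ℕ) : ℝ) / (2 * (q : ℝ) - 1) - 1⌉)
    (d : ℕ → ℤ) (hd : ∀ i : ℕ, d i = r i * (q : ℤ) - 1) :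
    ∑ i ∈ Finset.Icc 1 w,
        (((Pr.filter fun u => i ≤ fstarF f u).card : ℝ) / (Pr.card : ℝ)) *
          ∑ j ∈ Finset.Icc (d (i - 1) + 1) (d i), ((j.toNat + n - 1).choose (n - 1) : ℝ)
      ≤ ∑ x : Fin n → F, ((m * f x + n - 1).choose n : ℝ) :=
  stmt8_general F n hn q hq Pr hPr0 hPr f w m r hr d hd
end

section
/- Let q be a prime power, n, m ≥ 1 integers, δ ∈ [0,1], and let S ⊆ ℙF_q^{n-1} satisfy |S| ≥ δ·|ℙF_q^{n-1}|. Then for every integer d with 0 ≤ d < m·q, the F_q-rank of EVAL^m(S, W_{d,n}) is at least δ·C(d+n−1, n−1). -/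
/-- The `j`-th (multivariate) Hasse derivative of `Q`, i.e. the coefficient of `z^j`
in the expansion `Q(x+z) = ∑_j Q^{(j)}(x)·z^j`. -/
noncomputable def mvHasseDeriv {F : Type*} [CommSemiring F] {n : ℕ} (j : Fin n →₀ ℕ)
    (Q : MvPolynomial (Fin n) F) : MvPolynomial (Fin n) F :=
  ∑ v ∈ Q.support, MvPolynomial.monomial (v - j)
    (Q.coeff v * ((∏ i, (v i).choose (j i) : ℕ) : F))

/-- The columns of the matrix `EVAL^m(S, W_{d,n})`. -/
noncomputable def evalCol (F : Type) [Field F] (n m d : ℕ) (S : Finset (Fin n → F))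
    (v : {v : Fin n →₀ ℕ // (v.sum fun _ e => e) = d})
    (r : {r : (Fin n → F) × (Fin n →₀ ℕ) // r.1 ∈ S ∧ (r.2.sum fun _ e => e) < m}) : F :=
  MvPolynomial.eval r.1.1 (mvHasseDeriv r.1.2 (MvPolynomial.monomial v.1 (1 : F)))

/-- The `F_q`-rank of `EVAL^m(S, W_{d,n})`: the dimension of the span of its columns. -/
noncomputable def evalRank (F : Type) [Field F] (n m d : ℕ) (S : Finset (Fin n → F)) : ℕ :=
  Module.finrank F (Submodule.span F (Set.range (evalCol F n m d S)))

/-!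
For a finite set `A` of points of projective space, let `ρ(A)` be the number of independent linear
conditions that vanishing to order `m` at the points of `A` imposes on forms of degree `d`.
The rank function `ρ` is submodular and invariant under the special linear group. Greedy marginal
weights `w` satisfy `w(univ) = ρ(univ)` and `w(A) ≤ ρ(A)` for all `A`; averaging the second
inequality over the transitive group makes the weights constant, so `ρ(A)` is at least
`|A| / |ℙ| * ρ(univ)`. Finally `ρ(univ)` is the dimension of the space of all forms: by the
Schwartz–Zippel bound with multiplicities a form of degree `d < m q` that vanishes to order `m` at
all nonzero points is zero. `ρ(A)` is the rank of the evaluation matrix, and it does not depend on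
the representatives because rescaling a point only rescales a form.
-/

open MvPolynomial
open scoped Pointwise

section FatPoints

variable {σ R : Type*} [CommSemiring R] {x : σ → R} {m : ℕ} {Q : MvPolynomial σ R}

/-- The Taylor shift `Q(z) ↦ Q(x + z)`, whose coefficients are the Hasse derivatives of `Q` at
`x`. -/
noncomputable def taylorShift (x : σ → R) : MvPolynomial σ R →ₐ[R] MvPolynomial σ R :=
  aeval fun i ↦ X i + C (x i)

/-- The ideal of the `m`-fold point at `x`: the polynomials vanishing to order at least `m` at `x`,
encoded as those whose Taylor shift has no terms of degree less than `m`. -/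
noncomputable def fatPointIdeal (x : σ → R) (m : ℕ) : Ideal (MvPolynomial σ R) :=
  (idealOfVars σ R ^ m).comap (taylorShift x)

theorem mem_fatPointIdeal : Q ∈ fatPointIdeal x m ↔ taylorShift x Q ∈ idealOfVars σ R ^ m :=
  Iff.rfl

theorem mem_fatPointIdeal_iff_coeff :
    Q ∈ fatPointIdeal x m ↔ ∀ j : σ →₀ ℕ, j.degree < m → (taylorShift x Q).coeff j = 0 :=
  mem_pow_idealOfVars_iff' m _

theorem fatPointIdeal_anti (x : σ → R) : Antitone (fatPointIdeal x) :=
  fun _ _ h ↦ Ideal.comap_mono (Ideal.pow_le_pow_right h)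

theorem taylorShift_zero : taylorShift (0 : σ → R) = AlgHom.id R _ := by
  ext i
  simp [taylorShift]

theorem taylorShift_C (x : σ → R) (c : R) : taylorShift x (C c) = C c :=
  algHom_C _ c

end FatPoints

section SchwartzZippel

variable {R : Type*} [CommRing R]

theorem eq_zero_of_forall_X_sub_C_pow_dvd {ι : Type*} {s : Finset ι} {r : ι → R}
    (hr : (s : Set ι).Pairwise fun i j ↦ IsUnit (r i - r j)) {p : Polynomial R} {k : ℕ}
    (hp : p.natDegree < k * s.card)
    (hdvd : ∀ i ∈ s, (Polynomial.X - Polynomial.C (r i)) ^ k ∣ p) : p = 0 := by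
  nontriviality R
  have monic (i : ι) : ((Polynomial.X - Polynomial.C (r i)) ^ k).Monic :=
    (Polynomial.monic_X_sub_C _).pow k
  have prod_dvd : ∏ i ∈ s, (Polynomial.X - Polynomial.C (r i)) ^ k ∣ p :=
    Finset.prod_dvd_of_coprime
      (fun i hi j hj hij ↦ (Polynomial.isCoprime_X_sub_C_of_isUnit_sub (hr hi hj hij)).pow) hdvd
  by_contra hp0
  refine (Polynomial.monic_prod_of_monic s _ fun i _ ↦ monic i).not_dvd_of_natDegree_lt hp0 ?_
    prod_dvd
  rw [Polynomial.natDegree_prod_of_monic _ _ fun i _ ↦ monic i]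
  simpa [mul_comm, (Polynomial.monic_X_sub_C _).natDegree_pow] using hp

variable {n : ℕ}

theorem finSuccEquiv_taylorShift_cons (b : R) (a : Fin n → R) (Q : MvPolynomial (Fin (n + 1)) R) :
    MvPolynomial.finSuccEquiv R n (taylorShift (Fin.cons b a : Fin (n + 1) → R) Q) =
      ((MvPolynomial.finSuccEquiv R n Q).map (taylorShift a).toRingHom).comp
        (Polynomial.X + Polynomial.C (C b)) := by
  induction Q using MvPolynomial.induction_on with
  | C c => simp [MvPolynomial.finSuccEquiv_apply]
  | add p q hp hq => simp only [map_add, hp, hq, Polynomial.map_add, Polynomial.add_comp]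
  | mul_X p i hp =>
    have hX : MvPolynomial.finSuccEquiv R n (taylorShift (Fin.cons b a : Fin (n + 1) → R) (X i)) =
        ((MvPolynomial.finSuccEquiv R n (X i)).map (taylorShift a).toRingHom).comp
          (Polynomial.X + Polynomial.C (C b)) := by
      cases i using Fin.cases <;> simp [taylorShift, MvPolynomial.finSuccEquiv_apply]
    rw [map_mul, map_mul, hp, hX, map_mul, Polynomial.map_mul, Polynomial.mul_comp]

theorem coeff_finSuccEquiv_mem_pow {m : ℕ} {Q : MvPolynomial (Fin (n + 1)) R}
    (hQ : Q ∈ idealOfVars (Fin (n + 1)) R ^ m) (i : ℕ) :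
    (MvPolynomial.finSuccEquiv R n Q).coeff i ∈ idealOfVars (Fin n) R ^ (m - i) := by
  rw [mem_pow_idealOfVars_iff'] at hQ ⊢
  intro j hj
  rw [finSuccEquiv_coeff_coeff]
  apply hQ
  rw [Finsupp.degree_eq_sum, Fin.sum_univ_succ]
  simp only [Finsupp.cons_zero, Finsupp.cons_succ, ← Finsupp.degree_eq_sum]
  lia

theorem coeff_finSuccEquiv_mem_fatPointIdeal {S : Finset R}
    (hS : (S : Set R).Pairwise fun b c ↦ IsUnit (b - c)) {m k : ℕ} {a : Fin n → R}
    {Q : MvPolynomial (Fin (n + 1)) R}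
    (hQ : ∀ b ∈ S, Q ∈ fatPointIdeal (Fin.cons b a : Fin (n + 1) → R) m)
    (hdeg : (MvPolynomial.finSuccEquiv R n Q).natDegree < (k + 1) * S.card) (i : ℕ) :
    (MvPolynomial.finSuccEquiv R n Q).coeff i ∈ fatPointIdeal a (m - k) := by
  -- Modulo this power, each `b ∈ S` is a root of `P` of order `k + 1`: too many for its degree.
  set P := (MvPolynomial.finSuccEquiv R n Q).map (taylorShift a).toRingHom with hP
  set φ := Ideal.Quotient.mk (idealOfVars (Fin n) R ^ (m - k))
  have map_eq_zero : P.map φ = 0 := by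
    refine eq_zero_of_forall_X_sub_C_pow_dvd (s := S) (r := fun b ↦ φ (C b)) (k := k + 1)
      (fun b hb c hc hbc ↦ ?_) ?_ fun b hb ↦ ?_
    · simpa using (hS hb hc hbc).map (φ.comp C)
    · exact (Polynomial.natDegree_map_le.trans Polynomial.natDegree_map_le).trans_lt hdeg
    · rw [Polynomial.X_sub_C_pow_dvd_iff, Polynomial.X_pow_dvd_iff]
      intro l hl
      have shift_eq : (P.map φ).comp (Polynomial.X + Polynomial.C (φ (C b))) =
          (MvPolynomial.finSuccEquiv R n
            (taylorShift (Fin.cons b a : Fin (n + 1) → R) Q)).map φ := by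
        simp [finSuccEquiv_taylorShift_cons, Polynomial.map_comp, hP]
      rw [shift_eq, Polynomial.coeff_map, Ideal.Quotient.eq_zero_iff_mem]
      exact Ideal.pow_le_pow_right (by lia) (coeff_finSuccEquiv_mem_pow (hQ b hb) l)
  have coeff_map := congrArg (Polynomial.coeff · i) map_eq_zero
  simpa [P, φ, Ideal.Quotient.eq_zero_iff_mem, mem_fatPointIdeal] using coeff_map

theorem mul_card_le_totalDegree_of_mem_fatPointIdeal {S : Finset R}
    (hS : (S : Set R).Pairwise fun b c ↦ IsUnit (b - c)) {m : ℕ} {Q : MvPolynomial (Fin n) R}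
    (hQ0 : Q ≠ 0) (hQ : ∀ x : Fin n → R, (∀ i, x i ∈ S) → Q ∈ fatPointIdeal x m) :
    m * S.card ≤ Q.totalDegree := by
  induction n generalizing m with
  | zero =>
    obtain ⟨c, rfl⟩ : ∃ c, Q = C c := ⟨_, eq_C_of_isEmpty Q⟩
    have hm : m = 0 := by
      simpa [mem_fatPointIdeal, C_mem_pow_idealOfVars_iff, C_ne_zero.1 hQ0] using
        hQ 0 fun i ↦ i.elim0
    simp [hm]
  | succ n ih =>
    obtain hS0 | hS0 := S.card.eq_zero_or_pos
    · simp [hS0]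
    set P := MvPolynomial.finSuccEquiv R n Q
    set t := P.natDegree with ht
    have lead_ne_zero : P.coeff t ≠ 0 := by simpa [P, ht] using hQ0
    have lead_mem (a : Fin n → R) (ha : ∀ i, a i ∈ S) :
        P.coeff t ∈ fatPointIdeal a (m - t / S.card) := by
      refine coeff_finSuccEquiv_mem_fatPointIdeal hS (fun b hb ↦ hQ _ (Fin.cons hb ha)) ?_ t
      rw [mul_comm]; exact Nat.lt_mul_div_succ t hS0
    calc m * S.card ≤ (m - t / S.card) * S.card + t / S.card * S.card := by
          rw [← add_mul]; gcongr; lia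
      _ ≤ (P.coeff t).totalDegree + t :=
          add_le_add (ih lead_ne_zero lead_mem) (Nat.div_mul_le_self t _)
      _ ≤ Q.totalDegree := totalDegree_coeff_finSuccEquiv_add_le Q t lead_ne_zero

theorem eq_zero_of_isHomogeneous_of_mem_fatPointIdeal {F : Type*} [Field F] [Fintype F] [NeZero n]
    {m d : ℕ} (hd : d < m * Fintype.card F) {Q : MvPolynomial (Fin n) F}
    (hQhom : Q.IsHomogeneous d)
    (hQ : ∀ x ≠ 0, Q ∈ fatPointIdeal x m) : Q = 0 := by
  by_contra hQ0
  have hdeg : Q.totalDegree = d := hQhom.totalDegree hQ0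
  have mem_zero : Q ∈ fatPointIdeal 0 d := by
    rw [mem_fatPointIdeal_iff_coeff, taylorShift_zero]
    exact fun j hj ↦ hQhom.coeff_eq_zero hj.ne
  -- A form of degree `d` also vanishes to order `d` at the origin.
  have mem_all (x : Fin n → F) : Q ∈ fatPointIdeal x (min m d) := by
    obtain rfl | hx := eq_or_ne x 0
    · exact fatPointIdeal_anti 0 (min_le_right m d) mem_zero
    · exact fatPointIdeal_anti x (min_le_left m d) (hQ x hx)
  have hle : min m d * Fintype.card F ≤ d :=
    (mul_card_le_totalDegree_of_mem_fatPointIdeal (S := Finset.univ)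
      (fun b _ c _ hbc ↦ (sub_ne_zero.2 hbc).isUnit) hQ0 fun x _ ↦ mem_all x).trans_eq hdeg
  have hcard : 1 < Fintype.card F := Fintype.one_lt_card
  obtain rfl : d = 0 := by
    obtain h | h := min_choice m d <;> rw [h] at hle
    · lia
    · nlinarith
  obtain ⟨c, rfl⟩ : ∃ c, Q = C c := ⟨_, totalDegree_eq_zero_iff_eq_C.1 hdeg⟩
  have hm : m ≠ 0 := by rintro rfl; simp at hd
  have h1 := hQ 1 one_ne_zero
  rw [mem_fatPointIdeal, taylorShift_C, C_mem_pow_idealOfVars_iff] at h1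
  exact h1.elim (C_ne_zero.1 hQ0) hm

end SchwartzZippel

section Submodular

theorem exists_sum_le_of_submodular {α M : Type*} [DecidableEq α] [AddCommGroup M]
    [PartialOrder M] [IsOrderedAddMonoid M] {f : Finset α → M} (hf_empty : f ∅ = 0)
    (hf : ∀ A B, f (A ∪ B) + f (A ∩ B) ≤ f A + f B) (T : Finset α) :
    ∃ w : α → M, ∑ x ∈ T, w x = f T ∧ ∀ A ⊆ T, ∑ x ∈ A, w x ≤ f A := by
  induction T using Finset.induction_on with
  | empty => exact ⟨0, by simp [hf_empty], fun A hA ↦ by simp [Finset.subset_empty.1 hA, hf_empty]⟩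
  | insert x T hx ih =>
    -- The weight of a new point is its marginal contribution to `f`.
    obtain ⟨w, hwT, hw⟩ := ih
    have sum_update (c : M) {A : Finset α} (hA : x ∉ A) :
        ∑ y ∈ A, Function.update w x c y = ∑ y ∈ A, w y := Finset.sum_update_of_notMem hA w c
    refine ⟨Function.update w x (f (insert x T) - f T), ?_, fun A hA ↦ ?_⟩
    · rw [Finset.sum_insert hx, sum_update _ hx, Function.update_self, hwT, sub_add_cancel]
    by_cases hxA : x ∈ A
    · obtain ⟨B, hxB, rfl⟩ : ∃ B, x ∉ B ∧ insert x B = A :=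
        ⟨A.erase x, Finset.notMem_erase x A, Finset.insert_erase hxA⟩
      have hBT : B ⊆ T := (Finset.insert_subset_insert_iff hxB).1 hA
      have marginal_le : f (insert x T) + f B ≤ f T + f (insert x B) := by
        convert hf T (insert x B) using 3
        · rw [Finset.union_insert, Finset.union_eq_left.2 hBT]
        · rw [Finset.inter_insert_of_notMem hx, Finset.inter_eq_right.2 hBT]
      rw [Finset.sum_insert hxB, sum_update _ hxB, Function.update_self]
      calc f (insert x T) - f T + ∑ y ∈ B, w y ≤ f (insert x T) - f T + f B := by
            gcongr; exact hw B hBT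
        _ ≤ f (insert x B) := by
            rwa [sub_add_eq_add_sub, sub_le_iff_le_add']
    · rw [sum_update _ hxA]
      exact hw A ((Finset.subset_insert_iff_of_notMem hxA).1 hA)

variable {G X : Type*} [Group G] [MulAction G X] [Fintype X]
  [MulAction.IsPretransitive G X]

theorem card_nsmul_sum_smul [Fintype G] {M : Type*} [AddCommMonoid M] (w : X → M) (x : X) :
    Fintype.card X • ∑ g : G, w (g • x) = Fintype.card G • ∑ y, w y := by
  have sum_eq (y : X) : ∑ g : G, w (g • y) = ∑ g : G, w (g • x) := by
    obtain ⟨h, rfl⟩ := MulAction.exists_smul_eq G x y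
    exact Fintype.sum_equiv (Equiv.mulRight h) _ _ fun g ↦ by simp [mul_smul]
  calc Fintype.card X • ∑ g : G, w (g • x) = ∑ y, ∑ g : G, w (g • y) := by
        simp only [sum_eq, Finset.sum_const, Finset.card_univ]
    _ = ∑ g : G, ∑ y, w (g • y) := Finset.sum_comm
    _ = ∑ _g : G, ∑ y, w y :=
        Finset.sum_congr rfl fun g _ ↦ Equiv.sum_comp (MulAction.toPerm g) w
    _ = Fintype.card G • ∑ y, w y := by rw [Finset.sum_const, Finset.card_univ]

variable (G) in
theorem card_mul_le_card_mul_of_submodular [Finite G] [DecidableEq X] {R : Type*}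
    [CommRing R] [LinearOrder R] [IsStrictOrderedRing R] {f : Finset X → R} (hf_empty : f ∅ = 0)
    (hf : ∀ A B, f (A ∪ B) + f (A ∩ B) ≤ f A + f B)
    (hf_smul : ∀ (g : G) (A : Finset X), f (g • A) ≤ f A) (A : Finset X) :
    A.card * f Finset.univ ≤ Fintype.card X * f A := by
  have := Fintype.ofFinite G
  obtain ⟨w, hw_univ, hw⟩ := exists_sum_le_of_submodular hf_empty hf Finset.univ
  have orbit_sum (x : X) :
      (Fintype.card G : R) * f Finset.univ = Fintype.card X * ∑ g : G, w (g • x) := by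
    simpa only [nsmul_eq_mul, hw_univ] using (card_nsmul_sum_smul (G := G) w x).symm
  have sum_smul_le (g : G) : ∑ x ∈ A, w (g • x) ≤ f A := by
    rw [← Finset.sum_image (MulAction.injective g).injOn]
    exact (hw _ (Finset.subset_univ _)).trans (hf_smul g A)
  have hG : (0 : R) < Fintype.card G := Nat.cast_pos.2 Fintype.card_pos
  refine le_of_mul_le_mul_left ?_ hG
  calc (Fintype.card G : R) * (A.card * f Finset.univ)
      = ∑ _x ∈ A, Fintype.card G * f Finset.univ := by
        rw [Finset.sum_const, nsmul_eq_mul, mul_left_comm]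
    _ = Fintype.card X * ∑ x ∈ A, ∑ g : G, w (g • x) := by
        rw [Finset.mul_sum]; exact Finset.sum_congr rfl fun x _ ↦ orbit_sum x
    _ = Fintype.card X * ∑ g : G, ∑ x ∈ A, w (g • x) := by rw [Finset.sum_comm]
    _ ≤ Fintype.card X * ∑ _g : G, f A := by gcongr with g; exact sum_smul_le g
    _ = Fintype.card G * (Fintype.card X * f A) := by
        rw [Finset.sum_const, Finset.card_univ, nsmul_eq_mul, mul_left_comm]

theorem finrank_quotient_finsetInf_union_add_inter_le {K V ι : Type*} [DivisionRing K]
    [AddCommGroup V] [Module K V] [FiniteDimensional K V] [DecidableEq ι] (W : ι → Submodule K V)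
    (A B : Finset ι) :
    Module.finrank K (V ⧸ (A ∪ B).inf W) + Module.finrank K (V ⧸ (A ∩ B).inf W) ≤
      Module.finrank K (V ⧸ A.inf W) + Module.finrank K (V ⧸ B.inf W) := by
  have sup_le_inter : A.inf W ⊔ B.inf W ≤ (A ∩ B).inf W :=
    sup_le (Finset.inf_mono Finset.inter_subset_left) (Finset.inf_mono Finset.inter_subset_right)
  have hsup := Submodule.finrank_mono sup_le_inter
  have modular := Submodule.finrank_sup_add_finrank_inf_eq (A.inf W) (B.inf W)
  rw [← Finset.inf_union] at modular
  have hunion := Submodule.finrank_quotient_add_finrank ((A ∪ B).inf W)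
  have hinter := Submodule.finrank_quotient_add_finrank ((A ∩ B).inf W)
  have hA := Submodule.finrank_quotient_add_finrank (A.inf W)
  have hB := Submodule.finrank_quotient_add_finrank (B.inf W)
  lia

end Submodular

section Substitution

variable {σ R : Type*} [CommSemiring R]

theorem aeval_smul_of_isHomogeneous {A : Type*} [CommSemiring A] [Algebra R A] {d : ℕ}
    {Q : MvPolynomial σ R} (hQ : Q.IsHomogeneous d) (c : A) (f : σ → A) :
    aeval (c • f) Q = c ^ d * aeval f Q := by
  simp only [aeval_def, eval₂_eq, Finset.mul_sum]
  refine Finset.sum_congr rfl fun v hv ↦ ?_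
  have degree_eq : ∑ i ∈ v.support, v i = d := (hQ.degree_eq_sum_deg_support hv).symm
  simp only [Pi.smul_apply, smul_eq_mul, mul_pow, Finset.prod_mul_distrib,
    Finset.prod_pow_eq_pow_sum, degree_eq]
  exact mul_left_comm _ _ _

variable [Fintype σ]

theorem taylorShift_bind₁_toMvPolynomial (M : Matrix σ σ R) (x : σ → R) (Q : MvPolynomial σ R) :
    taylorShift x (bind₁ M.toMvPolynomial Q) =
      bind₁ M.toMvPolynomial (taylorShift (M.mulVec x) Q) := by
  suffices h : (taylorShift x).comp (bind₁ M.toMvPolynomial) =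
      (bind₁ M.toMvPolynomial).comp (taylorShift (M.mulVec x)) from DFunLike.congr_fun h Q
  ext1 i
  simp [taylorShift, Matrix.toMvPolynomial, ← C_mul_X_eq_monomial, algHom_C, mul_add,
    Finset.sum_add_distrib, Matrix.mulVec, dotProduct]

theorem bind₁_toMvPolynomial_mem_fatPointIdeal {M : Matrix σ σ R} {x : σ → R} {m : ℕ}
    {Q : MvPolynomial σ R} (hQ : Q ∈ fatPointIdeal (M.mulVec x) m) :
    bind₁ M.toMvPolynomial Q ∈ fatPointIdeal x m := by
  have map_le : (idealOfVars σ R).map (bind₁ M.toMvPolynomial) ≤ idealOfVars σ R := by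
    rw [Ideal.map_le_iff_le_comap, idealOfVars, Ideal.span_le, Set.range_subset_iff]
    intro i
    rw [SetLike.mem_coe, Ideal.mem_comap, bind₁_X_right, Matrix.toMvPolynomial]
    refine Ideal.sum_mem _ fun j _ ↦ ?_
    rw [← C_mul_X_eq_monomial]
    exact Ideal.mul_mem_left _ _ (Ideal.subset_span ⟨j, rfl⟩)
  have map_pow_le := (Ideal.map_pow _ _ m).trans_le (Ideal.pow_right_mono map_le m)
  rw [mem_fatPointIdeal, taylorShift_bind₁_toMvPolynomial]
  exact map_pow_le (Ideal.mem_map_of_mem _ hQ)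

/-- The substitution `Q(z) ↦ Q(M z)` on forms of degree `d`, through which matrices act on forms.
It is contravariant in `M`. -/
noncomputable def formSubst (d : ℕ) (M : Matrix σ σ R) :
    homogeneousSubmodule σ R d →ₗ[R] homogeneousSubmodule σ R d :=
  (bind₁ M.toMvPolynomial).toLinearMap.restrict fun Q hQ ↦ by
    simpa using IsHomogeneous.aeval hQ _ M.toMvPolynomial_isHomogeneous

theorem coe_formSubst {d : ℕ} (M : Matrix σ σ R) (Q : homogeneousSubmodule σ R d) :
    (formSubst d M Q : MvPolynomial σ R) = bind₁ M.toMvPolynomial Q := rfl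

theorem formSubst_formSubst {d : ℕ} (M N : Matrix σ σ R) (Q : homogeneousSubmodule σ R d) :
    formSubst d N (formSubst d M Q) = formSubst d (M * N) Q := by
  ext1
  simp only [coe_formSubst, bind₁_bind₁]
  simp [funext (Matrix.toMvPolynomial_mul M N)]

theorem formSubst_smul_one [DecidableEq σ] {d : ℕ} (c : R) (Q : homogeneousSubmodule σ R d) :
    formSubst d (c • 1) Q = c ^ d • Q := by
  have toMvPolynomial_eq :
      (c • 1 : Matrix σ σ R).toMvPolynomial = (C c : MvPolynomial σ R) • X := by
    ext1 i
    simp [Matrix.toMvPolynomial, Matrix.one_apply, apply_ite, C_mul_X_eq_monomial]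
  ext1
  rw [coe_formSubst, toMvPolynomial_eq, bind₁, aeval_smul_of_isHomogeneous Q.2]
  simp [smul_eq_C_mul]

theorem formSubst_one [DecidableEq σ] {d : ℕ} (Q : homogeneousSubmodule σ R d) :
    formSubst d (1 : Matrix σ σ R) Q = Q := by
  simpa using formSubst_smul_one 1 Q

end Substitution

section VanishingForms

variable {σ F : Type*}

/-- The forms of degree `d` vanishing to order at least `m` at `x`. The point `x` is a vector, so
that a point of projective space enters through a representative. -/
noncomputable def vanishingForms [CommSemiring F] (d m : ℕ) (x : σ → F) :
    Submodule F (homogeneousSubmodule σ F d) :=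
  ((fatPointIdeal x m).restrictScalars F).submoduleOf (homogeneousSubmodule σ F d)

theorem mem_vanishingForms [CommSemiring F] {d m : ℕ} {x : σ → F}
    {Q : homogeneousSubmodule σ F d} :
    Q ∈ vanishingForms d m x ↔ (Q : MvPolynomial σ F) ∈ fatPointIdeal x m := Iff.rfl

theorem formSubst_mem_vanishingForms [CommSemiring F] [Fintype σ] {d m : ℕ} {M : Matrix σ σ F}
    {x : σ → F} {Q : homogeneousSubmodule σ F d} (hQ : Q ∈ vanishingForms d m (M.mulVec x)) :
    formSubst d M Q ∈ vanishingForms d m x :=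
  bind₁_toMvPolynomial_mem_fatPointIdeal hQ

variable [Field F] {d m : ℕ}

theorem vanishingForms_smul_le [Finite σ] {c : F} (hc : c ≠ 0) (x : σ → F) :
    vanishingForms d m (c • x) ≤ vanishingForms d m x := by
  classical
  have := Fintype.ofFinite σ
  intro Q hQ
  have smul_mem : c ^ d • Q ∈ vanishingForms d m x := by
    rw [← formSubst_smul_one]
    exact formSubst_mem_vanishingForms (by simpa [Matrix.smul_mulVec] using hQ)
  exact (Submodule.smul_mem_iff _ (pow_ne_zero d hc)).1 smul_mem

theorem vanishingForms_smul [Finite σ] {c : F} (hc : c ≠ 0) (x : σ → F) :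
    vanishingForms d m (c • x) = vanishingForms d m x :=
  (vanishingForms_smul_le hc x).antisymm
    (by simpa [inv_smul_smul₀ hc] using
      vanishingForms_smul_le (d := d) (m := m) (inv_ne_zero hc) (c • x))

open scoped LinearAlgebra.Projectivization

theorem vanishingForms_rep_mk [Finite σ] {v : σ → F} (hv : v ≠ 0) :
    vanishingForms d m (Projectivization.mk F v hv).rep = vanishingForms d m v := by
  obtain ⟨a, ha⟩ := Projectivization.exists_smul_eq_mk_rep F v hv
  rw [← ha, Units.smul_def, vanishingForms_smul a.ne_zero]

variable [Fintype σ] [DecidableEq σ]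

theorem formSubst_injective (g : Matrix.SpecialLinearGroup σ F) :
    Function.Injective (formSubst d (g : Matrix σ σ F)) :=
  Function.LeftInverse.injective (g := formSubst d (g⁻¹ : Matrix.SpecialLinearGroup σ F).1)
    fun Q ↦ by rw [formSubst_formSubst, ← Matrix.SpecialLinearGroup.coe_mul, mul_inv_cancel,
      Matrix.SpecialLinearGroup.coe_one, formSubst_one]

theorem formSubst_inv_mem_vanishingForms_rep_smul (g : Matrix.SpecialLinearGroup σ F)
    {p : ℙ F (σ → F)} {Q : homogeneousSubmodule σ F d} (hQ : Q ∈ vanishingForms d m p.rep) :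
    formSubst d (g⁻¹ : Matrix.SpecialLinearGroup σ F).1 Q ∈ vanishingForms d m (g • p).rep := by
  have hne : (g : Matrix σ σ F).mulVec p.rep ≠ 0 :=
    (g.toLin'_equiv.toLinearEquiv.map_ne_zero_iff).2 p.rep_nonzero
  have smul_eq : g • p = Projectivization.mk F ((g : Matrix σ σ F).mulVec p.rep) hne := by
    conv_lhs => rw [← p.mk_rep]
    rfl
  rw [smul_eq, vanishingForms_rep_mk]
  refine formSubst_mem_vanishingForms ?_
  rwa [Matrix.mulVec_mulVec, ← Matrix.SpecialLinearGroup.coe_mul, inv_mul_cancel,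
    Matrix.SpecialLinearGroup.coe_one, Matrix.one_mulVec]

end VanishingForms

section Projective

open Module

theorem finrank_quotient_le_of_map_le {K V : Type*} [DivisionRing K] [AddCommGroup V] [Module K V]
    [FiniteDimensional K V] {W W' : Submodule K V} {f : V →ₗ[K] V} (hf : Function.Injective f)
    (h : W.map f ≤ W') : finrank K (V ⧸ W') ≤ finrank K (V ⧸ W) := by
  have map_eq := (W.equivMapOfInjective f hf).finrank_eq
  have map_le := Submodule.finrank_mono h
  have hW := W.finrank_quotient_add_finrank
  have hW' := W'.finrank_quotient_add_finrank
  lia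

open scoped LinearAlgebra.Projectivization

variable {F : Type*} [Field F] {n : ℕ}

instance finite_homogeneousSubmodule {σ R : Type*} [Finite σ] [CommSemiring R] (d : ℕ) :
    Module.Finite R (homogeneousSubmodule σ R d) :=
  Module.Finite.iff_fg.2 (homogeneousSubmodule_fg σ R d)

theorem finrank_quotient_vanishingForms_smul_le [DecidableEq (ℙ F (Fin n → F))] (d m : ℕ)
    (g : Matrix.SpecialLinearGroup (Fin n) F) (A : Finset (ℙ F (Fin n → F))) :
    finrank F (homogeneousSubmodule (Fin n) F d ⧸
        (g • A).inf fun p ↦ vanishingForms d m p.rep) ≤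
      finrank F (homogeneousSubmodule (Fin n) F d ⧸ A.inf fun p ↦ vanishingForms d m p.rep) := by
  refine finrank_quotient_le_of_map_le (formSubst_injective g⁻¹) ?_
  rintro _ ⟨Q, hQ, rfl⟩
  simp only [SetLike.mem_coe, Submodule.mem_finsetInf] at hQ ⊢
  intro p hp
  obtain ⟨p, hpA, rfl⟩ := Finset.mem_smul_finset.1 hp
  exact formSubst_inv_mem_vanishingForms_rep_smul g (hQ p hpA)

variable [Fintype F]

theorem inf_univ_vanishingForms_rep_eq_bot [NeZero n] [Fintype (ℙ F (Fin n → F))] {d m : ℕ}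
    (hd : d < m * Fintype.card F) :
    (Finset.univ.inf fun p : ℙ F (Fin n → F) ↦ vanishingForms d m p.rep) = ⊥ := by
  refine (Submodule.eq_bot_iff _).2 fun Q hQ ↦ Subtype.ext ?_
  rw [Submodule.mem_finsetInf] at hQ
  refine eq_zero_of_isHomogeneous_of_mem_fatPointIdeal hd Q.2 fun x hx ↦ ?_
  have mem_rep := hQ (Projectivization.mk F x hx) (Finset.mem_univ _)
  rwa [vanishingForms_rep_mk] at mem_rep

theorem card_mul_finrank_le_card_mul_finrank_quotient_vanishingForms [NeZero n]
    [Fintype (ℙ F (Fin n → F))] {d m : ℕ} (hd : d < m * Fintype.card F)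
    (A : Finset (ℙ F (Fin n → F))) :
    A.card * finrank F (homogeneousSubmodule (Fin n) F d) ≤
      Fintype.card (ℙ F (Fin n → F)) *
        finrank F (homogeneousSubmodule (Fin n) F d ⧸
          A.inf fun p ↦ vanishingForms d m p.rep) := by
  classical
  let V := homogeneousSubmodule (Fin n) F d
  let W (p : ℙ F (Fin n → F)) : Submodule F V := vanishingForms d m p.rep
  have rank_empty : finrank F (V ⧸ (∅ : Finset (ℙ F (Fin n → F))).inf W) = 0 := by
    rw [Finset.inf_empty]
    exact finrank_zero_of_subsingleton
  have rank_univ : finrank F (V ⧸ Finset.univ.inf W) = finrank F V := by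
    rw [inf_univ_vanishingForms_rep_eq_bot hd]
    exact (Submodule.quotEquivOfEqBot _ rfl).finrank_eq
  have key := card_mul_le_card_mul_of_submodular (Matrix.SpecialLinearGroup (Fin n) F)
    (f := fun B ↦ (finrank F (V ⧸ B.inf W) : ℤ)) (mod_cast rank_empty)
    (fun B B' ↦ mod_cast finrank_quotient_finsetInf_union_add_inter_le W B B')
    (fun g B ↦ mod_cast finrank_quotient_vanishingForms_smul_le d m g B) A
  simp only [rank_univ] at key
  exact_mod_cast key

end Projective

section Dimension

theorem finrank_homogeneousSubmodule {σ R : Type*} [Fintype σ] [CommRing R] [Nontrivial R] (d : ℕ) :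
    Module.finrank R (homogeneousSubmodule σ R d) = (Fintype.card σ + d - 1).choose d := by
  classical
  have exponents_eq : {v : σ →₀ ℕ | v.degree = d} =
      (Finset.univ.finsuppAntidiag d : Finset (σ →₀ ℕ)) := by
    ext v
    simp [Finset.mem_finsuppAntidiag, Finsupp.degree_eq_sum]
  rw [homogeneousSubmodule_eq_finsupp_supported, exponents_eq,
    (AddMonoidAlgebra.supportedEquivFinsupp _).finrank_eq, Module.finrank_finsupp_self]
  exact (Fintype.card_coe _).trans
    (by rw [Finset.card_finsuppAntidiag_nat_eq_choose, Finset.card_univ])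

end Dimension

section Rank

theorem coeff_prod_toMvPolynomial {σ R : Type*} [Fintype σ] [CommSemiring R] (p : σ → Polynomial R)
    (j : σ →₀ ℕ) : (∏ i, (p i).toMvPolynomial i).coeff j = ∏ i, (p i).coeff (j i) := by
  classical
  have expand (i : σ) : (p i).toMvPolynomial i =
      ∑ k ∈ (p i).support, C ((p i).coeff k) * X i ^ k := by
    simp [Polynomial.toMvPolynomial, Polynomial.aeval_def, Polynomial.eval₂_eq_sum,
      Polynomial.sum_def]
  simp only [expand, Finset.prod_univ_sum, coeff_sum, Finset.prod_mul_distrib, ← map_prod,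
    coeff_C_mul, coeff_prod_X_pow, mul_ite, mul_one, mul_zero]
  have exponent_eq (k : σ → ℕ) : j = Finsupp.indicator Finset.univ (fun i _ ↦ k i) ↔ ⇑j = k := by
    simp [DFunLike.ext_iff, funext_iff]
  simp only [exponent_eq, Finset.sum_ite_eq, Fintype.mem_piFinset, Polynomial.mem_support_iff]
  split_ifs with h
  · rfl
  · push Not at h
    obtain ⟨i, hi⟩ := h
    exact (Finset.prod_eq_zero (Finset.mem_univ i) hi).symm

theorem eval_mvHasseDeriv {R : Type*} [CommSemiring R] {n : ℕ} (x : Fin n → R) (j : Fin n →₀ ℕ)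
    (Q : MvPolynomial (Fin n) R) : eval x (mvHasseDeriv j Q) = (taylorShift x Q).coeff j := by
  have shift_pow (i : Fin n) (k : ℕ) : (X i + C (x i)) ^ k =
      ((Polynomial.X + Polynomial.C (x i)) ^ k).toMvPolynomial i := by simp
  rw [mvHasseDeriv, map_sum, taylorShift, aeval_def, eval₂_eq', coeff_sum]
  refine Finset.sum_congr rfl fun v _ ↦ ?_
  simp only [shift_pow, algebraMap_eq, coeff_C_mul, coeff_prod_toMvPolynomial,
    Polynomial.coeff_X_add_C_pow, eval_monomial, Finset.prod_mul_distrib, Nat.cast_prod]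
  rw [Finsupp.prod_fintype _ _ (by simp), mul_assoc, mul_comm (∏ i, _)]
  rfl

variable {F : Type} [Field F] {n : ℕ}

theorem evalRank_eq_finrank_quotient (m d : ℕ) (S : Finset (Fin n → F)) :
    evalRank F n m d S = Module.finrank F
      (homogeneousSubmodule (Fin n) F d ⧸ S.inf (vanishingForms d m)) := by
  let evalMap : MvPolynomial (Fin n) F →ₗ[F]
      {r : (Fin n → F) × (Fin n →₀ ℕ) // r.1 ∈ S ∧ (r.2.sum fun _ e => e) < m} → F :=
    LinearMap.pi fun r ↦ lcoeff F r.1.2 ∘ₗ (taylorShift r.1.1).toLinearMap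
  have ker_eq : (evalMap.domRestrict (homogeneousSubmodule (Fin n) F d)).ker =
      S.inf (vanishingForms d m) := by
    ext Q
    rw [Submodule.mem_finsetInf, LinearMap.mem_ker, funext_iff]
    simp only [mem_vanishingForms, mem_fatPointIdeal_iff_coeff]
    exact ⟨fun h x hx j hj ↦ h ⟨(x, j), hx, hj⟩, fun h r ↦ h _ r.2.1 _ r.2.2⟩
  have evalCol_eq (v : {v : Fin n →₀ ℕ // (v.sum fun _ e => e) = d}) :
      evalCol F n m d S v = evalMap (monomial v.1 1) :=
    funext fun r ↦ eval_mvHasseDeriv r.1.1 r.1.2 _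
  have span_eq : Submodule.span F (Set.range (evalCol F n m d S)) =
      (evalMap.domRestrict (homogeneousSubmodule (Fin n) F d)).range := by
    rw [LinearMap.range_domRestrict, homogeneousSubmodule_eq_finsupp_supported,
      AddMonoidAlgebra.supported_eq_span_single, Submodule.map_span, ← Set.image_comp,
      Set.image_eq_range]
    exact congrArg (Submodule.span F ∘ Set.range) (funext evalCol_eq)
  rw [evalRank, span_eq, ← ker_eq, LinearMap.quotKerEquivRange _ |>.finrank_eq]

end Rank

section Representatives

open scoped LinearAlgebra.Projectivization

variable {K V : Type*} [DivisionRing K] [AddCommGroup V] [Module K V]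

theorem bijective_mk_of_existsUnique {Pr : Finset V} (hPr0 : ∀ u ∈ Pr, u ≠ 0)
    (hPr : ∀ u : V, u ≠ 0 → ∃! w, w ∈ Pr ∧ ∃ c : Kˣ, u = (c : K) • w) :
    Function.Bijective fun u : Pr ↦ Projectivization.mk K u.1 (hPr0 u.1 u.2) := by
  refine ⟨fun u w huw ↦ ?_, fun p ↦ ?_⟩
  · obtain ⟨c, hc⟩ := (Projectivization.mk_eq_mk_iff _ _ _ _ _).1 huw
    exact Subtype.ext ((hPr u (hPr0 u u.2)).unique ⟨u.2, 1, by simp⟩ ⟨w.2, c, hc.symm⟩)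
  · obtain ⟨w, ⟨hw, c, hc⟩, -⟩ := hPr p.rep p.rep_nonzero
    refine ⟨⟨w, hw⟩, ?_⟩
    rw [← p.mk_rep]
    exact (Projectivization.mk_eq_mk_iff _ _ _ _ _).2 ⟨c⁻¹, by simp [hc, Units.smul_def]⟩

theorem card_mul_finrank_le_of_representatives {F : Type*} [Field F] [Fintype F] {n d m : ℕ}
    [NeZero n] (hd : d < m * Fintype.card F) {Pr S : Finset (Fin n → F)}
    (hPr0 : ∀ u ∈ Pr, u ≠ 0)
    (hPr : ∀ u : Fin n → F, u ≠ 0 → ∃! w, w ∈ Pr ∧ ∃ c : Fˣ, u = (c : F) • w) (hS : S ⊆ Pr) :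
    S.card * Module.finrank F (homogeneousSubmodule (Fin n) F d) ≤ Pr.card *
      Module.finrank F (homogeneousSubmodule (Fin n) F d ⧸ S.inf (vanishingForms d m)) := by
  classical
  have := Fintype.ofFinite (ℙ F (Fin n → F))
  have bijective_mk := bijective_mk_of_existsUnique hPr0 hPr
  have card_points := Fintype.card_of_bijective bijective_mk
  let A : Finset (ℙ F (Fin n → F)) :=
    S.attach.image fun u ↦ Projectivization.mk F u.1 (hPr0 u.1 (hS u.2))
  have card_A : A.card = S.card := by
    rw [Finset.card_image_of_injective, Finset.card_attach]
    exact bijective_mk.1.comp (Set.inclusion_injective hS)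
  have inf_A : (A.inf fun p ↦ vanishingForms d m p.rep) = S.inf (vanishingForms d m) := by
    simp only [A, Finset.inf_image, Function.comp_def, vanishingForms_rep_mk]
    exact Finset.inf_attach S _
  rw [Fintype.card_coe] at card_points
  rw [← card_A, ← inf_A, card_points]
  exact card_mul_finrank_le_card_mul_finrank_quotient_vanishingForms hd A

end Representatives

/- `Pr` plays the role of `ℙF_q^{n-1}` (fixed representatives of nonzero vectors up to
nonzero scalar multiples), and `S ⊆ Pr` contains at least a `δ` fraction of directions. -/
theorem stmt17 (F : Type) [Field F] [Fintype F] [DecidableEq F] (n m d : ℕ)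
    (hn : 1 ≤ n) (hm : 1 ≤ m) (hd : d < m * Fintype.card F)
    (δ : ℝ) (hδ0 : 0 ≤ δ) (hδ1 : δ ≤ 1)
    (Pr : Finset (Fin n → F)) (hPr0 : ∀ u ∈ Pr, u ≠ 0)
    (hPr : ∀ u : Fin n → F, u ≠ 0 → ∃! w, w ∈ Pr ∧ ∃ c : Fˣ, u = (c : F) • w)
    (S : Finset (Fin n → F)) (hS : S ⊆ Pr) (hScard : δ * (Pr.card : ℝ) ≤ (S.card : ℝ)) :
    δ * ((d + n - 1).choose (n - 1) : ℝ) ≤ (evalRank F n m d S : ℝ) := by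
  have : NeZero n := ⟨by lia⟩
  have dimension : Module.finrank F (homogeneousSubmodule (Fin n) F d) =
      (d + n - 1).choose (n - 1) := by
    rw [finrank_homogeneousSubmodule, Fintype.card_fin, add_comm n d]
    exact Nat.choose_symm_of_eq_add (by lia)
  have density : (S.card : ℝ) * (d + n - 1).choose (n - 1) ≤ Pr.card * evalRank F n m d S := by
    rw [evalRank_eq_finrank_quotient, ← dimension]
    exact_mod_cast card_mul_finrank_le_of_representatives hd hPr0 hPr hS
  have hPr_pos : (0 : ℝ) < Pr.card := by
    obtain ⟨w, ⟨hw, -⟩, -⟩ := hPr 1 one_ne_zero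
    exact_mod_cast Finset.card_pos.2 ⟨w, hw⟩
  refine le_of_mul_le_mul_left ?_ hPr_pos
  calc (Pr.card : ℝ) * (δ * (d + n - 1).choose (n - 1))
      = δ * Pr.card * (d + n - 1).choose (n - 1) := by ring
    _ ≤ S.card * (d + n - 1).choose (n - 1) := by gcongr
    _ ≤ Pr.card * evalRank F n m d S := density
end
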